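/- Fix an algebraic closure Ω of the field ℚ_2 of 2-adic numbers. There are exactly three intermediate fields E of Ω over ℚ_2 such that E is a finite Galois extension of ℚ_2 whose Galois group Gal(E / ℚ_2) is isomorphic to the symmetric group S_4 on four letters. -/

import Mathlib

/-!
Let `k = ℚ_[2]`. The splitting field `E` of a quartic with group `S₄` contains the splitting field
of its cubic resolvent, whose group is `S₃`. Over `ℚ_[2]` an `S₃`-cubic is totally and tamely
ramified, hence generates a conjugate of `L = k(p)` with `p³ = 2`. If `θ₀, …, θ₃` are the roots of
the quartic, suitably numbered, `g = θ₀ + θ₁ - θ₂ - θ₃` has `g² ∈ L`, `g ∉ L`, and the product of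
its three conjugates up to sign lies in `k`. Conversely every such `g` gives an `S₄`-extension, and
by Kummer theory `g` and `h` give the same one iff `g h ∈ L`. So the `S₄`-extensions correspond to
the nontrivial classes of `L` modulo squares whose norm is a square.

Successive approximation by `1 + p`, `(1 + p)²`, `3`, `(1 + p²)²`, `1 + p⁵`, `5`, whose
differences from `1` have leading terms `p, …, p⁶`, brings a unit so close to `1` that it becomes
a square, while `p = 2 (p⁻¹)²`. Hence modulo squares `L` is generated by `k`, `1 + p` and
`1 + p⁵`. These two have norms `3` and `33 ∈ k²`, so the classes of square norm are those generated
by `3 (1 + p)` and `1 + p⁵`.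
-/

open IntermediateField MvPolynomial

section GaloisAction

variable {k Ω ι : Type*} [Field k] [Field Ω] [Algebra k Ω]

theorem apply_eq_apply_of_mem_adjoin {S : Set Ω} {σ τ : Gal(Ω/k)} (h : ∀ y ∈ S, σ y = τ y)
    {x : Ω} (hx : x ∈ adjoin k S) : σ x = τ x := by
  induction hx using adjoin_induction with
  | mem y hy => exact h y hy
  | algebraMap a => simp only [AlgEquiv.commutes]
  | add y z _ _ hy hz => rw [map_add, map_add, hy, hz]
  | inv y _ hy => rw [map_inv₀, map_inv₀, hy]
  | mul y z _ _ hy hz => rw [map_mul, map_mul, hy, hz]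

theorem mem_adjoin_iff_forall_fixed [IsGalois k Ω] {S : Set Ω} {x : Ω} :
    x ∈ adjoin k S ↔ ∀ σ : Gal(Ω/k), (∀ y ∈ S, σ y = y) → σ x = x := by
  refine ⟨fun hx σ hσ ↦ apply_eq_apply_of_mem_adjoin (τ := 1) hσ hx, fun h ↦ ?_⟩
  rw [← InfiniteGalois.fixedField_fixingSubgroup (adjoin k S), mem_fixedField_iff]
  exact fun σ hσ ↦ h σ fun y hy ↦
    (IntermediateField.mem_fixingSubgroup_iff _ σ).1 hσ y (subset_adjoin k S hy)

theorem apply_eq_apply_of_mem_adjoin_simple {p x : Ω} {σ τ : Gal(Ω/k)} (h : σ p = τ p)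
    (hx : x ∈ k⟮p⟯) : σ x = τ x :=
  apply_eq_apply_of_mem_adjoin (by rintro _ rfl; exact h) hx

theorem mem_adjoin_simple_iff_forall_fixed [IsGalois k Ω] {p x : Ω} :
    x ∈ k⟮p⟯ ↔ ∀ σ : Gal(Ω/k), σ p = p → σ x = x := by
  simp only [mem_adjoin_iff_forall_fixed, Set.mem_singleton_iff, forall_eq]

/-- The intermediate fields that are finite Galois over `k` with group the full symmetric group
of `ι`. -/
def IsSymmetricExtension (ι : Type*) (E : IntermediateField k Ω) : Prop :=
  FiniteDimensional k E ∧ IsGalois k E ∧ Nonempty (Gal(E/k) ≃* Equiv.Perm ι)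

variable (k) in
/-- A family of distinct elements on which the absolute Galois group acts through the full
symmetric group of its index type. -/
structure IsSymmetricFamily (θ : ι → Ω) : Prop where
  injective : Function.Injective θ
  mem_range (σ : Gal(Ω/k)) (i : ι) : σ (θ i) ∈ Set.range θ
  exists_gal (π : Equiv.Perm ι) : ∃ σ : Gal(Ω/k), ∀ i, σ (θ i) = θ (π i)

namespace IsSymmetricFamily

variable {θ : ι → Ω}

theorem exists_permHom (hθ : IsSymmetricFamily k θ) :
    ∃ ρ : Gal(Ω/k) →* Equiv.Perm ι, Function.Surjective ρ ∧ ∀ σ i, σ (θ i) = θ (ρ σ i) := by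
  choose f hf using hθ.mem_range
  have f_mul (σ τ i) : f (σ * τ) i = f σ (f τ i) := hθ.injective <| by
    rw [hf, hf, hf, AlgEquiv.mul_apply]
  have f_one (i) : f 1 i = i := hθ.injective <| by rw [hf, AlgEquiv.one_apply]
  let ρ : Gal(Ω/k) →* Equiv.Perm ι :=
    { toFun := fun σ ↦ ⟨f σ, f σ⁻¹, fun i ↦ by rw [← f_mul, inv_mul_cancel, f_one],
        fun i ↦ by rw [← f_mul, mul_inv_cancel, f_one]⟩
      map_one' := Equiv.ext f_one
      map_mul' := fun σ τ ↦ Equiv.ext (f_mul σ τ) }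
  have hρ (σ i) : σ (θ i) = θ (ρ σ i) := (hf σ i).symm
  refine ⟨ρ, fun π ↦ ?_, hρ⟩
  obtain ⟨σ, hσ⟩ := hθ.exists_gal π
  exact ⟨σ, Equiv.ext fun i ↦ hθ.injective <| by rw [← hρ, hσ]⟩

theorem exists_perm (hθ : IsSymmetricFamily k θ) (σ : Gal(Ω/k)) :
    ∃ π : Equiv.Perm ι, ∀ i, σ (θ i) = θ (π i) :=
  let ⟨ρ, _, hρ⟩ := hθ.exists_permHom
  ⟨ρ σ, hρ σ⟩

theorem comp_perm (hθ : IsSymmetricFamily k θ) (π : Equiv.Perm ι) :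
    IsSymmetricFamily k (θ ∘ π) where
  injective := hθ.injective.comp π.injective
  mem_range σ i := by
    rw [π.surjective.range_comp]
    exact hθ.mem_range σ (π i)
  exists_gal τ := by
    obtain ⟨σ, hσ⟩ := hθ.exists_gal (π * τ * π⁻¹)
    exact ⟨σ, fun i ↦ by simp [hσ]⟩

theorem of_equivariant (hθ : IsSymmetricFamily k θ) {η : ι → Ω} (hη : Function.Injective η)
    (h : ∀ (σ : Gal(Ω/k)) (π : Equiv.Perm ι), (∀ i, σ (θ i) = θ (π i)) → ∀ i, σ (η i) = η (π i)) :
    IsSymmetricFamily k η where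
  injective := hη
  mem_range σ i := let ⟨π, hπ⟩ := hθ.exists_perm σ; ⟨π i, (h σ π hπ i).symm⟩
  exists_gal π := let ⟨σ, hσ⟩ := hθ.exists_gal π; ⟨σ, h σ π hσ⟩

theorem sub_algebraMap (hθ : IsSymmetricFamily k θ) (m : k) :
    IsSymmetricFamily k fun i ↦ θ i - algebraMap k Ω m :=
  hθ.of_equivariant (fun i j hij ↦ hθ.injective (sub_left_injective hij)) fun σ π hσ i ↦ by
    rw [map_sub, hσ, AlgEquiv.commutes]

theorem algebraMap_mul (hθ : IsSymmetricFamily k θ) {α : k} (hα : α ≠ 0) :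
    IsSymmetricFamily k fun i ↦ algebraMap k Ω α * θ i :=
  have hα' : algebraMap k Ω α ≠ 0 := (_root_.map_ne_zero _).2 hα
  hθ.of_equivariant (fun i j hij ↦ hθ.injective (mul_left_cancel₀ hα' hij)) fun σ π hσ i ↦ by
    rw [map_mul, hσ, AlgEquiv.commutes]

theorem aeval_mem_range [IsGalois k Ω] (hθ : IsSymmetricFamily k θ) {f : MvPolynomial ι k}
    (hf : f.IsSymmetric) : aeval θ f ∈ Set.range (algebraMap k Ω) := by
  rw [InfiniteGalois.mem_range_algebraMap_iff_fixed]
  intro σ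
  obtain ⟨π, hπ⟩ := hθ.exists_perm σ
  calc σ (aeval θ f) = aeval (σ ∘ θ) f :=
        MvPolynomial.comp_aeval_apply θ (σ : Ω →ₐ[k] Ω) f
    _ = aeval (θ ∘ π) f := by rw [show σ ∘ θ = θ ∘ π from funext hπ]
    _ = aeval θ f := by rw [← aeval_rename, hf π]

theorem isSymmetricExtension [Finite ι] [IsGalois k Ω] (hθ : IsSymmetricFamily k θ) :
    IsSymmetricExtension ι (adjoin k (Set.range θ)) := by
  set E := adjoin k (Set.range θ) with hE
  have hfin : FiniteDimensional k E :=
    have : Finite (Set.range θ) := Set.finite_range θ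
    finiteDimensional_adjoin fun x _ ↦ Algebra.IsIntegral.isIntegral x
  have hnormal : Normal k E := by
    rw [normal_iff_forall_map_le']
    intro σ
    rw [hE, adjoin_map]
    apply adjoin.mono
    rintro _ ⟨_, ⟨i, rfl⟩, rfl⟩
    exact hθ.mem_range σ i
  obtain ⟨ρ, hsurj, hρ⟩ := hθ.exists_permHom
  have hker : (AlgEquiv.restrictNormalHom (F := k) (K₁ := Ω) E).ker = ρ.ker := by
    ext σ
    rw [E.restrictNormalHom_ker, MonoidHom.mem_ker, IntermediateField.mem_fixingSubgroup_iff]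
    constructor
    · intro h
      exact Equiv.ext fun i ↦ hθ.injective <| by
        rw [← hρ, h _ (subset_adjoin k _ ⟨i, rfl⟩), Equiv.Perm.one_apply]
    · intro h x hx
      refine apply_eq_apply_of_mem_adjoin (τ := 1) ?_ hx
      rintro _ ⟨i, rfl⟩
      rw [hρ, h, Equiv.Perm.one_apply, AlgEquiv.one_apply]
  exact ⟨hfin, {}, ⟨(QuotientGroup.quotientKerEquivOfSurjective _
    (AlgEquiv.restrictNormalHom_surjective (F := k) (K₁ := E) Ω)).symm.trans
    ((QuotientGroup.quotientMulEquivOfEq hker).trans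
      (QuotientGroup.quotientKerEquivOfSurjective ρ hsurj))⟩⟩

end IsSymmetricFamily

theorem exists_forall_fixed_iff_mem {E : Type*} [Field E] [Algebra k E] [FiniteDimensional k E]
    [IsGalois k E] (H : Subgroup Gal(E/k)) : ∃ α : E, ∀ σ : Gal(E/k), σ α = α ↔ σ ∈ H := by
  obtain ⟨α, hα⟩ := Field.exists_primitive_element k (fixedField H)
  refine ⟨α, fun σ ↦ ⟨fun h ↦ ?_, fun hσ ↦ (mem_fixedField_iff H _).1 α.2 σ hσ⟩⟩
  rw [← fixingSubgroup_fixedField H, IntermediateField.mem_fixingSubgroup_iff]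
  have hadjoin : fixedField H = k⟮(α : E)⟯ := by
    rw [← lift_adjoin_simple, hα, lift_top]
  intro x hx
  exact apply_eq_apply_of_mem_adjoin_simple (τ := 1) h (hadjoin ▸ hx)

theorem exists_equivariant_of_mulEquiv_perm [Nonempty ι] {E : Type*} [Field E]
    [Algebra k E] [FiniteDimensional k E] [IsGalois k E] (φ : Gal(E/k) ≃* Equiv.Perm ι) :
    ∃ θ : ι → E, Function.Injective θ ∧ ∀ σ i, σ (θ i) = θ (φ σ i) := by
  classical
  obtain ⟨i₀⟩ := ‹Nonempty ι›
  obtain ⟨α, hα⟩ := exists_forall_fixed_iff_mem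
    ((MulAction.stabilizer (Equiv.Perm ι) i₀).comap φ.toMonoidHom)
  have hα (σ : Gal(E/k)) : σ α = α ↔ φ σ i₀ = i₀ := hα σ
  have apply_eq_iff (σ τ : Gal(E/k)) : σ α = τ α ↔ φ σ i₀ = φ τ i₀ := by
    rw [← AlgEquiv.symm_apply_eq, ← AlgEquiv.aut_inv, ← AlgEquiv.mul_apply, hα, map_mul, map_inv,
      Equiv.Perm.mul_apply, Equiv.Perm.inv_eq_iff_eq, eq_comm]
  let r (i : ι) : Gal(E/k) := φ.symm (Equiv.swap i₀ i)
  have hr (i) : φ (r i) i₀ = i := by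
    rw [MulEquiv.apply_symm_apply, Equiv.swap_apply_left]
  refine ⟨fun i ↦ r i α, fun i j hij ↦ ?_, fun σ i ↦ ?_⟩
  · rw [← hr i, ← hr j, ← apply_eq_iff]
    exact hij
  · rw [← AlgEquiv.mul_apply, apply_eq_iff, map_mul, Equiv.Perm.mul_apply, hr, hr]

theorem IsSymmetricExtension.exists_isSymmetricFamily [Nonempty ι] [IsGalois k Ω]
    {E : IntermediateField k Ω} (hE : IsSymmetricExtension ι E) :
    ∃ θ : ι → Ω, IsSymmetricFamily k θ ∧ E = adjoin k (Set.range θ) := by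
  obtain ⟨_, _, ⟨φ⟩⟩ := hE
  obtain ⟨θ, hinj, hθ⟩ := exists_equivariant_of_mulEquiv_perm φ
  let res := AlgEquiv.restrictNormalHom (F := k) (K₁ := Ω) E
  have apply_coe (σ : Gal(Ω/k)) (x : E) : σ (x : Ω) = (res σ x : E) :=
    (AlgEquiv.restrictNormal_commutes σ E x).symm
  have hcoe (σ : Gal(Ω/k)) (i) : σ (θ i : Ω) = θ (φ (res σ) i) := by rw [apply_coe, hθ]
  refine ⟨fun i ↦ θ i, ⟨Subtype.val_injective.comp hinj, fun σ i ↦ ⟨_, (hcoe σ i).symm⟩,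
    fun π ↦ ?_⟩, le_antisymm (fun x hx ↦ ?_) (adjoin_le_iff.2 ?_)⟩
  · obtain ⟨σ, hσ⟩ := AlgEquiv.restrictNormalHom_surjective (F := k) (K₁ := E) Ω (φ.symm π)
    exact ⟨σ, fun i ↦ by rw [hcoe, hσ, MulEquiv.apply_symm_apply]⟩
  · refine mem_adjoin_iff_forall_fixed.2 fun σ hσ ↦ ?_
    have hres : res σ = 1 := φ.injective <| by
      rw [map_one]
      exact Equiv.ext fun i ↦ hinj <| Subtype.ext <| by
        rw [← hcoe, hσ _ ⟨i, rfl⟩, Equiv.Perm.one_apply]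
    rw [apply_coe σ ⟨x, hx⟩, hres, AlgEquiv.one_apply]
  · rintro _ ⟨i, rfl⟩
    exact (θ i).2

end GaloisAction

section CubicFrame

variable {k Ω : Type*} [Field k] [Field Ω] [Algebra k Ω] {p : Ω} {c t : Gal(Ω/k)}

theorem eq_zero_of_neg_eq_self [NeZero (2 : Ω)] {x : Ω} (hx : -x = x) : x = 0 :=
  (mul_eq_zero.1 (by linear_combination -hx : 2 * x = 0)).resolve_left (NeZero.ne 2)

/-- A generator `p` of a cubic field with group `S₃`, together with automorphisms `c` and `t`
lifting a 3-cycle of its conjugates and the transposition that fixes `p`. -/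
structure IsCubicFrame (p : Ω) (c t : Gal(Ω/k)) : Prop where
  apply_eq_or (σ : Gal(Ω/k)) : σ p = p ∨ σ p = c p ∨ σ p = c (c p)
  c_c_c : c (c (c p)) = p
  c_ne : c p ≠ p
  t_fix : t p = p
  t_c : t (c p) = c (c p)

/-- The automorphisms fixing `p` and `c p`; in a cubic frame, the Galois group over the normal
closure of `k⟮p⟯`. -/
def frameKernel (p : Ω) (c : Gal(Ω/k)) : Subgroup Gal(Ω/k) :=
  MulAction.stabilizer Gal(Ω/k) p ⊓ MulAction.stabilizer Gal(Ω/k) (c p)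

theorem mem_frameKernel_iff {σ : Gal(Ω/k)} :
    σ ∈ frameKernel p c ↔ σ p = p ∧ σ (c p) = c p := Iff.rfl

theorem apply_eq_apply_of_frameKernel_fixed {x : Ω} (hx : ∀ κ ∈ frameKernel p c, κ x = x)
    {σ τ : Gal(Ω/k)} (h : σ p = τ p) (h' : σ (c p) = τ (c p)) : σ x = τ x := by
  have := hx (τ⁻¹ * σ) (mem_frameKernel_iff.2 ?_)
  · rwa [AlgEquiv.mul_apply, AlgEquiv.aut_inv, AlgEquiv.symm_apply_eq] at this
  · simp only [AlgEquiv.mul_apply, AlgEquiv.aut_inv, AlgEquiv.symm_apply_eq, h, h', and_self]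

namespace IsCubicFrame

theorem c_c_ne (F : IsCubicFrame p c t) : c (c p) ≠ p := fun h ↦
  F.c_ne <| by rw [← h, F.c_c_c, h]

theorem t_c_c (F : IsCubicFrame p c t) : t (c (c p)) = c p := by
  rcases F.apply_eq_or (t * c * c) with h | h | h <;> simp only [AlgEquiv.mul_apply] at h
  · exact absurd (t.injective (h.trans F.t_fix.symm)) F.c_c_ne
  · exact h
  · exact absurd (c.injective (t.injective (h.trans F.t_c.symm))) F.c_ne

theorem apply_c_c_of_mem (F : IsCubicFrame p c t) {κ : Gal(Ω/k)} (hκ : κ ∈ frameKernel p c) :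
    κ (c (c p)) = c (c p) := by
  obtain ⟨h, h'⟩ := mem_frameKernel_iff.1 hκ
  rcases F.apply_eq_or (κ * c * c) with h₂ | h₂ | h₂ <;> simp only [AlgEquiv.mul_apply] at h₂
  · exact absurd (κ.injective (h₂.trans h.symm)) F.c_c_ne
  · exact absurd (c.injective (κ.injective (h₂.trans h'.symm))) F.c_ne
  · exact h₂

theorem conj_mem_frameKernel (F : IsCubicFrame p c t) {κ : Gal(Ω/k)}
    (hκ : κ ∈ frameKernel p c) : c * κ * c⁻¹ ∈ frameKernel p c := by
  have hinv : c⁻¹ p = c (c p) := by rw [AlgEquiv.aut_inv, AlgEquiv.symm_apply_eq, F.c_c_c]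
  have hinv' : c⁻¹ (c p) = p := c.symm_apply_apply p
  rw [mem_frameKernel_iff]
  simp only [AlgEquiv.mul_apply, hinv, hinv', F.apply_c_c_of_mem hκ, F.c_c_c,
    (mem_frameKernel_iff.1 hκ).1, and_self]

theorem mem_frameKernel_or (F : IsCubicFrame p c t) {σ : Gal(Ω/k)} (hσ : σ p = p) :
    σ ∈ frameKernel p c ∨ t⁻¹ * σ ∈ frameKernel p c := by
  rcases F.apply_eq_or (σ * c) with h | h | h <;> simp only [AlgEquiv.mul_apply] at h
  · exact absurd (σ.injective (h.trans hσ.symm)) F.c_ne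
  · exact .inl ⟨hσ, h⟩
  · refine .inr (mem_frameKernel_iff.2 ?_)
    simp only [AlgEquiv.mul_apply, AlgEquiv.aut_inv, AlgEquiv.symm_apply_eq, hσ, h, F.t_fix, F.t_c,
      and_self]

theorem subgroup_eq_top (F : IsCubicFrame p c t) {H : Subgroup Gal(Ω/k)} (hc : c ∈ H) (ht : t ∈ H)
    (hK : frameKernel p c ≤ H) : H = ⊤ := by
  have hfix (σ : Gal(Ω/k)) (hσ : σ p = p) : σ ∈ H := (F.mem_frameKernel_or hσ).elim
    (fun h ↦ hK h) fun h ↦ (H.mul_mem_cancel_left (H.inv_mem ht)).1 (hK h)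
  refine eq_top_iff.2 fun σ _ ↦ ?_
  rcases F.apply_eq_or σ with h | h | h
  · exact hfix σ h
  · refine (H.mul_mem_cancel_left (H.inv_mem hc)).1 (hfix _ ?_)
    rw [AlgEquiv.mul_apply, h, AlgEquiv.aut_inv, AlgEquiv.symm_apply_apply]
  · refine (H.mul_mem_cancel_left (H.inv_mem (H.mul_mem hc hc))).1 (hfix _ ?_)
    rw [AlgEquiv.mul_apply, h, AlgEquiv.aut_inv, AlgEquiv.symm_apply_eq, AlgEquiv.mul_apply]

section Membership

variable {x : Ω} (F : IsCubicFrame p c t) (hx : x ∈ k⟮p⟯)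
include F hx

theorem c_c_c_of_mem : c (c (c x)) = x :=
  apply_eq_apply_of_mem_adjoin_simple (σ := c * c * c) (τ := 1) F.c_c_c hx

theorem t_of_mem : t x = x :=
  apply_eq_apply_of_mem_adjoin_simple (τ := 1) F.t_fix hx

theorem t_c_of_mem : t (c x) = c (c x) :=
  apply_eq_apply_of_mem_adjoin_simple (σ := t * c) (τ := c * c) F.t_c hx

theorem t_c_c_of_mem : t (c (c x)) = c x :=
  apply_eq_apply_of_mem_adjoin_simple (σ := t * c * c) (τ := c) F.t_c_c hx

theorem fixed_of_mem {κ : Gal(Ω/k)} (hκ : κ ∈ frameKernel p c) :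
    κ x = x ∧ κ (c x) = c x ∧ κ (c (c x)) = c (c x) :=
  ⟨apply_eq_apply_of_mem_adjoin_simple (τ := 1) hκ.1 hx,
    apply_eq_apply_of_mem_adjoin_simple (σ := κ * c) (τ := c) hκ.2 hx,
    apply_eq_apply_of_mem_adjoin_simple (σ := κ * c * c) (τ := c * c) (F.apply_c_c_of_mem hκ) hx⟩

end Membership

end IsCubicFrame

/-- The product of the translates of `x` under `1`, `c` and `c²`; in a cubic frame, the norm from
`k⟮p⟯` to `k`. -/
def cubicNorm (c : Gal(Ω/k)) : Ω →* Ω where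
  toFun x := x * c x * c (c x)
  map_one' := by simp only [map_one, mul_one]
  map_mul' x y := by simp only [map_mul]; ring

theorem cubicNorm_apply (c : Gal(Ω/k)) (x : Ω) : cubicNorm c x = x * c x * c (c x) := rfl

theorem cubicNorm_ne_zero {x : Ω} (hx : x ≠ 0) : cubicNorm c x ≠ 0 := by
  rw [cubicNorm_apply]
  exact mul_ne_zero (mul_ne_zero hx (by simpa using hx)) (by simpa using hx)

theorem cubicNorm_algebraMap (c : Gal(Ω/k)) (q : k) :
    cubicNorm c (algebraMap k Ω q) = algebraMap k Ω (q ^ 3) := by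
  simp only [cubicNorm_apply, AlgEquiv.commutes, map_pow]
  ring

namespace IsCubicFrame

variable [IsGalois k Ω]

theorem mem_range_of_fixed (F : IsCubicFrame p c t) {x : Ω} (hc : c x = x) (ht : t x = x)
    (hK : ∀ κ ∈ frameKernel p c, κ x = x) : x ∈ Set.range (algebraMap k Ω) := by
  have := F.subgroup_eq_top (H := MulAction.stabilizer Gal(Ω/k) x) hc ht hK
  exact (InfiniteGalois.mem_range_algebraMap_iff_fixed x).2 fun σ ↦
    (this ▸ Subgroup.mem_top σ : σ ∈ MulAction.stabilizer Gal(Ω/k) x)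

theorem cubicNorm_mem_range (F : IsCubicFrame p c t) {x : Ω} (hx : x ∈ k⟮p⟯) :
    cubicNorm c x ∈ Set.range (algebraMap k Ω) := by
  refine F.mem_range_of_fixed ?_ ?_ fun κ hκ ↦ ?_
  · simp only [cubicNorm_apply, map_mul, F.c_c_c_of_mem hx]
    ring
  · simp only [cubicNorm_apply, map_mul, F.t_of_mem hx, F.t_c_of_mem hx, F.t_c_c_of_mem hx]
    ring
  · obtain ⟨h₁, h₂, h₃⟩ := F.fixed_of_mem hx hκ
    simp only [cubicNorm_apply, map_mul, h₁, h₂, h₃]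

-- If `t x = -x`, then `t` also exchanges `c x` and `-c² x`, so it negates the norm.
theorem mem_of_frameKernel_fixed [NeZero (2 : Ω)] (F : IsCubicFrame p c t) {x : Ω}
    (hsq : x ^ 2 ∈ k⟮p⟯) (hN : cubicNorm c x ∈ Set.range (algebraMap k Ω))
    (hK : ∀ κ ∈ frameKernel p c, κ x = x) : x ∈ k⟮p⟯ := by
  have ht : t x = x := by
    rcases sq_eq_sq_iff_eq_or_eq_neg.1 (by rw [← map_pow, F.t_of_mem hsq] : t x ^ 2 = x ^ 2) with
      h | h
    · exact h
    have htc : t (c x) = -c (c x) := by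
      have := apply_eq_apply_of_frameKernel_fixed hK (σ := t * c) (τ := c * c * t)
        (by simp only [AlgEquiv.mul_apply, F.t_fix, F.t_c])
        (by simp only [AlgEquiv.mul_apply, F.t_c, F.t_c_c, F.c_c_c])
      simpa only [AlgEquiv.mul_apply, h, map_neg] using this
    have htcc : t (c (c x)) = -c x := by
      have := apply_eq_apply_of_frameKernel_fixed hK (σ := t * c * c) (τ := c * t)
        (by simp only [AlgEquiv.mul_apply, F.t_fix, F.t_c_c])
        (by simp only [AlgEquiv.mul_apply, F.t_fix, F.t_c, F.c_c_c])
      simpa only [AlgEquiv.mul_apply, h, map_neg] using this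
    have htN : t (cubicNorm c x) = cubicNorm c x := by
      obtain ⟨q, hq⟩ := hN
      rw [← hq, AlgEquiv.commutes]
    have hzero : cubicNorm c x = 0 := eq_zero_of_neg_eq_self <| by
      simp only [cubicNorm_apply, map_mul, h, htc, htcc] at htN ⊢
      linear_combination htN
    have hx : x = 0 := by_contra fun hx ↦ cubicNorm_ne_zero hx hzero
    rw [hx, map_zero]
  refine mem_adjoin_simple_iff_forall_fixed.2 fun σ hσ ↦
    (F.mem_frameKernel_or hσ).elim (hK σ) fun h ↦ ?_
  have := hK _ h
  rwa [AlgEquiv.mul_apply, AlgEquiv.aut_inv, AlgEquiv.symm_apply_eq, ht] at this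

end IsCubicFrame
end CubicFrame

section Equivariant
variable {k Ω ι : Type*} [Field k] [Field Ω] [Algebra k Ω] {θ : ι → Ω}

variable (k) in
/-- The pairs of an automorphism and a permutation of `ι` that act compatibly on the family `θ`. -/
def equivariantPairs (θ : ι → Ω) : Subgroup (Gal(Ω/k) × Equiv.Perm ι) where
  carrier := {a | ∀ i, a.1 (θ i) = θ (a.2 i)}
  one_mem' _ := rfl
  mul_mem' {a b} ha hb i := by
    rw [Prod.fst_mul, Prod.snd_mul, AlgEquiv.mul_apply, Equiv.Perm.mul_apply, hb, ha]
  inv_mem' {a} ha i := by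
    rw [Prod.fst_inv, Prod.snd_inv, AlgEquiv.aut_inv, AlgEquiv.symm_apply_eq, ha,
      ← Equiv.Perm.mul_apply, mul_inv_cancel, Equiv.Perm.one_apply]

theorem IsSymmetricFamily.of_equivariantPairs (hθ : Function.Injective θ)
    (hfst : (equivariantPairs k θ).map (MonoidHom.fst _ _) = ⊤)
    (hsnd : (equivariantPairs k θ).map (MonoidHom.snd _ _) = ⊤) : IsSymmetricFamily k θ where
  injective := hθ
  mem_range σ i := by
    obtain ⟨a, ha, rfl⟩ := (hfst ▸ Subgroup.mem_top σ : σ ∈ Subgroup.map _ _)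
    exact ⟨a.2 i, (ha i).symm⟩
  exists_gal π := by
    obtain ⟨a, ha, rfl⟩ := (hsnd ▸ Subgroup.mem_top π : π ∈ Subgroup.map _ _)
    exact ⟨a.1, ha⟩

theorem permFinFour_subgroup_eq_top {H : Subgroup (Equiv.Perm (Fin 4))} (h₀₁ : Equiv.swap 0 1 ∈ H)
    (h₁₂ : Equiv.swap 1 2 ∈ H) (h₂₃ : Equiv.swap 2 3 ∈ H) : H = ⊤ := by
  have : Submonoid.closure (Set.range fun i : Fin 3 ↦ Equiv.swap i.castSucc i.succ) ≤
      H.toSubmonoid := by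
    rw [Submonoid.closure_le]
    rintro _ ⟨i, rfl⟩
    fin_cases i
    exacts [h₀₁, h₁₂, h₂₃]
  rw [Equiv.Perm.mclosure_swap_castSucc_succ] at this
  exact eq_top_iff.2 fun π _ ↦ this trivial

end Equivariant

section FourSums

variable {k Ω : Type*} [Field k] [Field Ω] [Algebra k Ω]

/-- Up to a factor `4`, the roots of the quartic with resolvent roots `x`, `y`, `z`. -/
def resolventSums (x y z : Ω) : Fin 4 → Ω := ![x + y + z, x - y - z, -x + y - z, -x - y + z]

variable [NeZero (2 : Ω)] {x y z : Ω}

theorem resolventSums_injective_iff : Function.Injective (resolventSums x y z) ↔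
    x ^ 2 ≠ y ^ 2 ∧ y ^ 2 ≠ z ^ 2 ∧ z ^ 2 ≠ x ^ 2 := by
  constructor
  · intro h
    refine ⟨fun h' ↦ ?_, fun h' ↦ ?_, fun h' ↦ ?_⟩ <;>
      rcases sq_eq_sq_iff_eq_or_eq_neg.1 h' with rfl | rfl
    · exact absurd (@h 1 2 (by simp [resolventSums])) (by decide)
    · exact absurd (@h 0 3 (by simp [resolventSums])) (by decide)
    · exact absurd (@h 2 3 (by simp [resolventSums])) (by decide)
    · exact absurd (@h 0 1 (by simp [resolventSums])) (by decide)
    · exact absurd (@h 1 3 (show z - y - z = -z - y + z by ring)) (by decide)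
    · exact absurd (@h 0 2 (by simp [resolventSums])) (by decide)
  rintro ⟨hxy, hyz, hzx⟩
  have two_mul_ne_zero {u v : Ω} (huv : u ^ 2 ≠ v ^ 2) : 2 * (u + v) ≠ 0 ∧ 2 * (u - v) ≠ 0 := by
    constructor <;> refine mul_ne_zero (NeZero.ne 2) fun h ↦ huv ?_
    · linear_combination (u - v) * h
    · linear_combination (u + v) * h
  obtain ⟨hxy', hxy⟩ := two_mul_ne_zero hxy
  obtain ⟨hyz', hyz⟩ := two_mul_ne_zero hyz
  obtain ⟨hzx', hzx⟩ := two_mul_ne_zero hzx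
  refine Function.injective_iff_pairwise_ne.2 fun i j hij h ↦ ?_
  fin_cases i <;> fin_cases j <;> simp [resolventSums] at hij h <;> grind

theorem adjoin_range_resolventSums :
    adjoin k (Set.range (resolventSums x y z)) = adjoin k {x, y, z} := by
  refine le_antisymm (adjoin_le_iff.2 ?_) (adjoin_le_iff.2 ?_)
  · have hx : x ∈ adjoin k {x, y, z} := subset_adjoin k _ (by simp)
    have hy : y ∈ adjoin k {x, y, z} := subset_adjoin k _ (by simp)
    have hz : z ∈ adjoin k {x, y, z} := subset_adjoin k _ (by simp)
    rintro _ ⟨i, rfl⟩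
    fin_cases i
    exacts [add_mem (add_mem hx hy) hz, sub_mem (sub_mem hx hy) hz,
      sub_mem (add_mem (neg_mem hx) hy) hz, add_mem (sub_mem (neg_mem hx) hy) hz]
  · have half_mem {u : Ω} (i j) (h : 2 * u = resolventSums x y z i + resolventSums x y z j) :
        u ∈ adjoin k (Set.range (resolventSums x y z)) := by
      rw [← mul_div_cancel_left₀ u (NeZero.ne 2), h]
      exact div_mem (add_mem (subset_adjoin k _ ⟨i, rfl⟩) (subset_adjoin k _ ⟨j, rfl⟩))
        (ofNat_mem _ 2)
    simp only [Set.insert_subset_iff, Set.singleton_subset_iff]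
    exact ⟨half_mem 0 1 (show _ = x + y + z + (x - y - z) by ring),
      half_mem 0 2 (show _ = x + y + z + (-x + y - z) by ring),
      half_mem 0 3 (show _ = x + y + z + (-x - y + z) by ring)⟩

section Equivariance

omit [NeZero (2 : Ω)]

variable {σ : Gal(Ω/k)}

theorem cycle_mem_equivariantPairs (hx : σ x = y) (hy : σ y = z) (hz : σ z = x) :
    (σ, .swap 1 2 * .swap 2 3) ∈ equivariantPairs k (resolventSums x y z) := by
  intro i
  fin_cases i <;> simp [resolventSums, Equiv.swap_apply_def, hx, hy, hz] <;> ring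

theorem swap_mem_equivariantPairs (hx : σ x = x) (hy : σ y = z) (hz : σ z = y) :
    (σ, .swap 2 3) ∈ equivariantPairs k (resolventSums x y z) := by
  intro i
  fin_cases i <;> simp [resolventSums, Equiv.swap_apply_def, hx, hy, hz] <;> ring

theorem neg_neg_mem_equivariantPairs (hx : σ x = x) (hy : σ y = -y) (hz : σ z = -z) :
    (σ, .swap 0 1 * .swap 2 3) ∈ equivariantPairs k (resolventSums x y z) := by
  intro i
  fin_cases i <;> simp [resolventSums, Equiv.swap_apply_def, hx, hy, hz] <;> ring

end Equivariance

theorem exists_mem_equivariantPairs {σ : Gal(Ω/k)} (hx : σ x = x ∨ σ x = -x)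
    (hy : σ y = y ∨ σ y = -y) (hz : σ z = z ∨ σ z = -z)
    (hxyz : σ x * σ y * σ z = x * y * z) (h₀ : x * y * z ≠ 0) :
    ∃ π, (σ, π) ∈ equivariantPairs k (resolventSums x y z) := by
  have neg_ne : -(x * y * z) ≠ x * y * z := mt eq_zero_of_neg_eq_self h₀
  rcases hx with hx | hx <;> rcases hy with hy | hy <;> rcases hz with hz | hz
  · exact ⟨1, fun i ↦ by fin_cases i <;> simp [resolventSums, hx, hy, hz]⟩
  · exact absurd (by simpa [hx, hy, hz] using hxyz) neg_ne
  · exact absurd (by simpa [hx, hy, hz] using hxyz) neg_ne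
  · exact ⟨_, neg_neg_mem_equivariantPairs hx hy hz⟩
  · exact absurd (by simpa [hx, hy, hz] using hxyz) neg_ne
  · refine ⟨.swap 0 2 * .swap 1 3, fun i ↦ ?_⟩
    fin_cases i <;> simp [resolventSums, Equiv.swap_apply_def, hx, hy, hz] <;> ring
  · refine ⟨.swap 0 3 * .swap 1 2, fun i ↦ ?_⟩
    fin_cases i <;> simp [resolventSums, Equiv.swap_apply_def, hx, hy, hz] <;> ring
  · exact absurd (by simpa [hx, hy, hz] using hxyz) neg_ne

end FourSums

section ResolventRoot
variable {k Ω : Type*} [Field k] [Field Ω] [Algebra k Ω] {p g : Ω} {c t : Gal(Ω/k)}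

/-- The square roots of elements of the cubic field `k⟮p⟯` whose norm to `k` is a square; each
generates, with its translates, an extension with group `S₄` whose cubic resolvent field is
`k⟮p⟯`. -/
structure IsResolventRoot (p : Ω) (c : Gal(Ω/k)) (g : Ω) : Prop where
  sq_mem : g ^ 2 ∈ k⟮p⟯
  notMem : g ∉ k⟮p⟯
  cubicNorm_mem : cubicNorm c g ∈ Set.range (algebraMap k Ω)

/-- The field generated by the translates of `g` under `1`, `c` and `c²`. -/
def resolventField (c : Gal(Ω/k)) (g : Ω) : IntermediateField k Ω := adjoin k {g, c g, c (c g)}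

namespace IsResolventRoot

theorem ne_zero (hg : IsResolventRoot p c g) : g ≠ 0 := by
  rintro rfl
  exact hg.notMem (zero_mem _)

theorem apply_cubicNorm (hg : IsResolventRoot p c g) (σ : Gal(Ω/k)) :
    σ g * σ (c g) * σ (c (c g)) = g * c g * c (c g) := by
  obtain ⟨q, hq⟩ := hg.cubicNorm_mem
  rw [cubicNorm_apply] at hq
  rw [← map_mul, ← map_mul, ← hq, AlgEquiv.commutes]

theorem c_c_c (hg : IsResolventRoot p c g) : c (c (c g)) = g := by
  have h := hg.apply_cubicNorm c
  have h₀ : c g * c (c g) ≠ 0 := by simpa using hg.ne_zero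
  exact mul_left_cancel₀ h₀ (by linear_combination h)

theorem conj_apply (hg : IsResolventRoot p c g) (σ : Gal(Ω/k)) :
    (c * σ * c⁻¹) g = c (σ (c (c g))) ∧ (c * σ * c⁻¹) (c g) = c (σ g) ∧
      (c * σ * c⁻¹) (c (c g)) = c (σ (c g)) := by
  have hinv : c⁻¹ g = c (c g) := by rw [AlgEquiv.aut_inv, AlgEquiv.symm_apply_eq, hg.c_c_c]
  have hinv' (u : Ω) : c⁻¹ (c u) = u := c.symm_apply_apply u
  simp only [AlgEquiv.mul_apply, hinv, hinv', and_self]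

theorem c_sq_ne (hg : IsResolventRoot p c g) : c (g ^ 2) ≠ g ^ 2 := by
  intro h
  obtain ⟨q, hq⟩ := hg.cubicNorm_mem
  have hN : cubicNorm c g ∈ k⟮p⟯ := hq ▸ IntermediateField.algebraMap_mem _ q
  refine hg.notMem ?_
  have hg₀ := hg.ne_zero
  have hmem := div_mem hN hg.sq_mem
  rw [map_pow, sq_eq_sq_iff_eq_or_eq_neg] at h
  rcases h with h | h
  · convert hmem using 1
    rw [cubicNorm_apply, h, h]
    field_simp
  · convert neg_mem hmem using 1
    rw [cubicNorm_apply, h, map_neg, h]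
    field_simp

section Frame
variable (F : IsCubicFrame p c t) (hg : IsResolventRoot p c g)
include F hg

theorem apply_eq_or_neg {κ : Gal(Ω/k)} (hκ : κ ∈ frameKernel p c) :
    (κ g = g ∨ κ g = -g) ∧ (κ (c g) = c g ∨ κ (c g) = -c g) ∧
      (κ (c (c g)) = c (c g) ∨ κ (c (c g)) = -c (c g)) := by
  simp only [← sq_eq_sq_iff_eq_or_eq_neg, ← map_pow]
  exact F.fixed_of_mem hg.sq_mem hκ

theorem apply_eq_self_of_apply_sq {σ : Gal(Ω/k)} (h : σ (g ^ 2) = g ^ 2) : σ p = p := by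
  rcases F.apply_eq_or σ with hp | hp | hp
  · exact hp
  · rw [apply_eq_apply_of_mem_adjoin_simple hp hg.sq_mem] at h
    exact absurd h hg.c_sq_ne
  · rw [apply_eq_apply_of_mem_adjoin_simple (τ := c * c) hp hg.sq_mem, AlgEquiv.mul_apply] at h
    refine absurd ?_ hg.c_sq_ne
    nth_rw 1 [← h]
    exact F.c_c_c_of_mem hg.sq_mem

theorem mem_frameKernel_of_fixed {σ : Gal(Ω/k)} (h : σ g = g) (h' : σ (c g) = c g) :
    σ ∈ frameKernel p c := by
  refine ⟨hg.apply_eq_self_of_apply_sq F (by rw [map_pow, h]), ?_⟩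
  have := hg.apply_eq_self_of_apply_sq F (σ := c⁻¹ * σ * c) (by
    simp only [AlgEquiv.mul_apply, AlgEquiv.aut_inv, map_pow, h', AlgEquiv.symm_apply_apply])
  rwa [AlgEquiv.mul_apply, AlgEquiv.mul_apply, AlgEquiv.aut_inv, AlgEquiv.symm_apply_eq] at this

variable [NeZero (2 : Ω)]

theorem exists_frameKernel_neg_neg_self [IsGalois k Ω] :
    ∃ κ ∈ frameKernel p c, κ g = -g ∧ κ (c g) = -c g ∧ κ (c (c g)) = c (c g) := by
  obtain ⟨κ, hκ, hne⟩ : ∃ κ ∈ frameKernel p c, κ g ≠ g := by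
    by_contra! h
    exact hg.notMem (F.mem_of_frameKernel_fixed hg.sq_mem hg.cubicNorm_mem h)
  obtain ⟨h₁, h₂, -⟩ := hg.apply_eq_or_neg F hκ
  replace h₁ := h₁.resolve_left hne
  have hN := hg.apply_cubicNorm κ
  have hg₀ : g * c g ≠ 0 := by simpa using hg.ne_zero
  rcases h₂ with h₂ | h₂
  · refine ⟨c * κ * c⁻¹, F.conj_mem_frameKernel hκ, ?_⟩
    have h₃ : κ (c (c g)) = -c (c g) := mul_left_cancel₀ hg₀ (by
      rw [h₁, h₂] at hN; linear_combination -hN)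
    simp only [hg.conj_apply, h₁, h₂, h₃, map_neg, hg.c_c_c, and_self]
  · exact ⟨κ, hκ, h₁, h₂, mul_left_cancel₀ hg₀ (by rw [h₁, h₂] at hN; linear_combination hN)⟩

theorem exists_frameKernel_self_neg_neg [IsGalois k Ω] :
    ∃ κ ∈ frameKernel p c, κ g = g ∧ κ (c g) = -c g ∧ κ (c (c g)) = -c (c g) := by
  obtain ⟨κ, hκ, h₁, h₂, h₃⟩ := hg.exists_frameKernel_neg_neg_self F
  refine ⟨c * κ * c⁻¹, F.conj_mem_frameKernel hκ, ?_⟩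
  simp only [hg.conj_apply, h₁, h₂, h₃, map_neg, hg.c_c_c, and_self]

theorem exists_gal_swap [IsGalois k Ω] : ∃ τ : Gal(Ω/k), τ p = p ∧ τ (c p) = c (c p) ∧
    τ g = g ∧ τ (c g) = c (c g) ∧ τ (c (c g)) = c g := by
  obtain ⟨κ, hκ, h₁, -, -⟩ := hg.exists_frameKernel_neg_neg_self F
  obtain ⟨κ', hκ', h₁', -, h₃'⟩ := hg.exists_frameKernel_self_neg_neg F
  obtain ⟨τ₁, hp₁, hcp₁, hτ₁⟩ : ∃ τ : Gal(Ω/k), τ p = p ∧ τ (c p) = c (c p) ∧ τ g = g := by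
    rcases sq_eq_sq_iff_eq_or_eq_neg.1 (by rw [← map_pow, F.t_of_mem hg.sq_mem] :
      t g ^ 2 = g ^ 2) with h | h
    · exact ⟨t, F.t_fix, F.t_c, h⟩
    · refine ⟨κ * t, ?_⟩
      simp only [AlgEquiv.mul_apply, F.t_fix, F.t_c, h, map_neg, h₁, neg_neg,
        (mem_frameKernel_iff.1 hκ).1, F.apply_c_c_of_mem hκ, and_self]
  obtain ⟨τ, hp, hcp, hτ, hτc⟩ : ∃ τ : Gal(Ω/k), τ p = p ∧ τ (c p) = c (c p) ∧ τ g = g ∧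
      τ (c g) = c (c g) := by
    have hsq : τ₁ (c g) ^ 2 = c (c g) ^ 2 := by
      simp only [← map_pow]
      exact apply_eq_apply_of_mem_adjoin_simple (σ := τ₁ * c) (τ := c * c) hcp₁ hg.sq_mem
    rcases sq_eq_sq_iff_eq_or_eq_neg.1 hsq with h | h
    · exact ⟨τ₁, hp₁, hcp₁, hτ₁, h⟩
    · refine ⟨κ' * τ₁, ?_⟩
      simp only [AlgEquiv.mul_apply, hp₁, hcp₁, hτ₁, h, map_neg, h₁', h₃', neg_neg,
        (mem_frameKernel_iff.1 hκ').1, F.apply_c_c_of_mem hκ', and_self]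
  have hN := hg.apply_cubicNorm τ
  have h₀ : g * c (c g) ≠ 0 := by simpa using hg.ne_zero
  exact ⟨τ, hp, hcp, hτ, hτc, mul_left_cancel₀ h₀ (by rw [hτ, hτc] at hN; linear_combination hN)⟩

theorem resolventSums_injective : Function.Injective (resolventSums g (c g) (c (c g))) := by
  have h := hg.c_sq_ne
  have hc := F.c_c_c_of_mem hg.sq_mem
  simp only [map_pow] at h hc
  refine resolventSums_injective_iff.2 ⟨h.symm, fun h' ↦ h (c.injective ?_), fun h' ↦ h ?_⟩
  · simpa only [map_pow] using h'.symm
  · simpa only [map_pow, hc] using (congrArg c h').symm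

theorem isSymmetricFamily [IsGalois k Ω] :
    IsSymmetricFamily k (resolventSums g (c g) (c (c g))) := by
  obtain ⟨τ, hp, hcp, hτ, hτc, hτcc⟩ := hg.exists_gal_swap F
  obtain ⟨κ, -, hκ₁, hκ₂, hκ₃⟩ := hg.exists_frameKernel_self_neg_neg F
  have c_mem := cycle_mem_equivariantPairs (k := k) rfl rfl hg.c_c_c
  have τ_mem := swap_mem_equivariantPairs hτ hτc hτcc
  have κ_mem := neg_neg_mem_equivariantPairs hκ₁ hκ₂ hκ₃
  refine .of_equivariantPairs (hg.resolventSums_injective F) ?_ ?_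
  · have F' : IsCubicFrame p c τ := ⟨F.apply_eq_or, F.c_c_c, F.c_ne, hp, hcp⟩
    refine F'.subgroup_eq_top ⟨_, c_mem, rfl⟩ ⟨_, τ_mem, rfl⟩ fun σ hσ ↦ ?_
    obtain ⟨h₁, h₂, h₃⟩ := hg.apply_eq_or_neg F hσ
    obtain ⟨π, hπ⟩ := exists_mem_equivariantPairs h₁ h₂ h₃ (hg.apply_cubicNorm σ)
      (cubicNorm_ne_zero hg.ne_zero)
    exact ⟨_, hπ, rfl⟩
  · refine permFinFour_subgroup_eq_top ⟨_, mul_mem κ_mem τ_mem, ?_⟩ ⟨_, mul_mem c_mem τ_mem, ?_⟩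
      ⟨_, τ_mem, rfl⟩ <;> exact Equiv.mul_swap_mul_self 2 3 _

theorem isSymmetricExtension [IsGalois k Ω] :
    IsSymmetricExtension (Fin 4) (resolventField c g) := by
  rw [resolventField, ← adjoin_range_resolventSums]
  exact (hg.isSymmetricFamily F).isSymmetricExtension

end Frame
end IsResolventRoot
end ResolventRoot

section ResolventRoot
variable {k Ω : Type*} [Field k] [Field Ω] [Algebra k Ω] {p g h : Ω} {c t : Gal(Ω/k)}

namespace IsResolventRoot

theorem t_apply_eq_or_neg (F : IsCubicFrame p c t) (hg : IsResolventRoot p c g) :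
    (t g = g ∨ t g = -g) ∧ (t (c g) = c (c g) ∨ t (c g) = -c (c g)) ∧
      (t (c (c g)) = c g ∨ t (c (c g)) = -c g) := by
  simp only [← sq_eq_sq_iff_eq_or_eq_neg, ← map_pow]
  exact ⟨F.t_of_mem hg.sq_mem, F.t_c_of_mem hg.sq_mem, F.t_c_c_of_mem hg.sq_mem⟩

-- `κ` has the same sign on `c g` and on `c (c g)`, which `t` exchanges up to sign.
theorem apply_t_comm (F : IsCubicFrame p c t) (hg : IsResolventRoot p c g) {κ : Gal(Ω/k)}
    (hκ : κ ∈ frameKernel p c) (hκg : κ g = g) {y : Ω} (hy : y ∈ resolventField c g) :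
    κ (t y) = t (κ y) := by
  obtain ⟨-, hc, -⟩ := hg.apply_eq_or_neg F hκ
  obtain ⟨ht, htc, htcc⟩ := hg.t_apply_eq_or_neg F
  have hN := hg.apply_cubicNorm κ
  have h₀ : g * c g ≠ 0 := by simpa using hg.ne_zero
  refine apply_eq_apply_of_mem_adjoin (σ := κ * t) (τ := t * κ) ?_ hy
  simp only [Set.mem_insert_iff, Set.mem_singleton_iff, forall_eq_or_imp, forall_eq,
    AlgEquiv.mul_apply]
  rcases hc with hc | hc
  · have hcc : κ (c (c g)) = c (c g) := mul_left_cancel₀ h₀ (by rw [← hN, hκg, hc])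
    rcases ht with ht | ht <;> rcases htc with htc | htc <;> rcases htcc with htcc | htcc <;>
      simp only [ht, htc, htcc, hκg, hc, hcc, map_neg, and_self]
  · have hcc : κ (c (c g)) = -c (c g) := mul_left_cancel₀ h₀ (by
      rw [hκg, hc] at hN; linear_combination -hN)
    rcases ht with ht | ht <;> rcases htc with htc | htc <;> rcases htcc with htcc | htcc <;>
      simp only [ht, htc, htcc, hκg, hc, hcc, map_neg, and_self]

variable [NeZero (2 : Ω)]

theorem apply_eq_self_of_apply_t_comm (F : IsCubicFrame p c t) (hg : IsResolventRoot p c g)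
    {κ : Gal(Ω/k)} (hκ : κ ∈ frameKernel p c) (hκt : κ (t (c g)) = t (κ (c g))) : κ g = g := by
  obtain ⟨-, hc, hcc⟩ := hg.apply_eq_or_neg F hκ
  obtain ⟨-, htc, -⟩ := hg.t_apply_eq_or_neg F
  have hN := hg.apply_cubicNorm κ
  have h₀ : c g * c (c g) ≠ 0 := by simpa using hg.ne_zero
  have neg_ne : -c (c g) ≠ c (c g) := mt eq_zero_of_neg_eq_self (right_ne_zero_of_mul h₀)
  have neg_neg_ne : c (c g) ≠ -c (c g) := neg_ne.symm
  rcases hc with hc | hc <;> rcases hcc with hcc | hcc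
  · exact mul_right_cancel₀ h₀ (by rw [hc, hcc] at hN; linear_combination hN)
  · rcases htc with htc | htc <;> simp_all
  · rcases htc with htc | htc <;> simp_all
  · exact mul_right_cancel₀ h₀ (by rw [hc, hcc] at hN; linear_combination hN)

theorem mul_mem_of_resolventField_eq [IsGalois k Ω] (F : IsCubicFrame p c t)
    (hg : IsResolventRoot p c g) (hh : IsResolventRoot p c h)
    (heq : resolventField c g = resolventField c h) : g * h ∈ k⟮p⟯ := by
  have fixed_of_fixed {u v : Ω} (hu : IsResolventRoot p c u) (hv : IsResolventRoot p c v)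
      (huv : resolventField c u = resolventField c v) {κ : Gal(Ω/k)} (hκ : κ ∈ frameKernel p c)
      (hκu : κ u = u) : κ v = v :=
    hv.apply_eq_self_of_apply_t_comm F hκ
      (hu.apply_t_comm F hκ hκu (huv ▸ subset_adjoin k _ (by simp)))
  refine F.mem_of_frameKernel_fixed (mul_pow g h 2 ▸ mul_mem hg.sq_mem hh.sq_mem) ?_ fun κ hκ ↦ ?_
  · obtain ⟨a, ha⟩ := hg.cubicNorm_mem
    obtain ⟨b, hb⟩ := hh.cubicNorm_mem
    exact ⟨a * b, by rw [map_mul, map_mul, ha, hb]⟩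
  · rcases (hg.apply_eq_or_neg F hκ).1 with h₁ | h₁
    · rw [map_mul, h₁, fixed_of_fixed hg hh heq hκ h₁]
    · rcases (hh.apply_eq_or_neg F hκ).1 with h₂ | h₂
      · rw [map_mul, h₂, fixed_of_fixed hh hg heq.symm hκ h₂]
      · rw [map_mul, h₁, h₂, neg_mul_neg]

omit [NeZero (2 : Ω)] in
theorem resolventField_le_of_mul_mem [IsGalois k Ω] (F : IsCubicFrame p c t)
    (hg : IsResolventRoot p c g) (hmul : g * h ∈ k⟮p⟯) :
    resolventField c h ≤ resolventField c g := by
  intro y hy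
  refine mem_adjoin_iff_forall_fixed.2 fun σ hσ ↦ apply_eq_apply_of_mem_adjoin (τ := 1) ?_ hy
  simp only [Set.mem_insert_iff, Set.mem_singleton_iff, forall_eq_or_imp, forall_eq] at hσ ⊢
  obtain ⟨h₁, h₂, h₃⟩ := hσ
  obtain ⟨h₁', h₂', h₃'⟩ := F.fixed_of_mem hmul (hg.mem_frameKernel_of_fixed F h₁ h₂)
  have hg₀ := hg.ne_zero
  simp only [map_mul, h₁, h₂, h₃] at h₁' h₂' h₃'
  exact ⟨mul_left_cancel₀ hg₀ h₁', mul_left_cancel₀ (by simpa using hg₀) h₂',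
    mul_left_cancel₀ (by simpa using hg₀) h₃'⟩

theorem resolventField_eq_iff [IsGalois k Ω] (F : IsCubicFrame p c t)
    (hg : IsResolventRoot p c g) (hh : IsResolventRoot p c h) :
    resolventField c g = resolventField c h ↔ g * h ∈ k⟮p⟯ :=
  ⟨hg.mul_mem_of_resolventField_eq F hh, fun hmul ↦
    (hh.resolventField_le_of_mul_mem F (mul_comm g h ▸ hmul)).antisymm
      (hg.resolventField_le_of_mul_mem F hmul)⟩

end IsResolventRoot
end ResolventRoot

section ElementarySymmetric

variable {R : Type*} [CommSemiring R]

theorem esymm_three (a b c : R) :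
    Multiset.esymm {a, b, c} 1 = a + b + c ∧ Multiset.esymm {a, b, c} 2 = a * b + a * c + b * c ∧
      Multiset.esymm {a, b, c} 3 = a * b * c := by
  simp only [Multiset.esymm, Multiset.insert_eq_cons, ← Multiset.cons_zero,
    Multiset.powersetCard_cons, Multiset.powersetCard_zero_left, Multiset.powersetCard_zero_right,
    Multiset.map_add, Multiset.map_cons, Multiset.map_zero, Multiset.sum_add, Multiset.sum_cons,
    Multiset.sum_zero, Multiset.prod_cons, Multiset.prod_zero]
  refine ⟨?_, ?_, ?_⟩ <;> ring

theorem esymm_four (a b c d : R) :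
    Multiset.esymm {a, b, c, d} 1 = a + b + c + d ∧
      Multiset.esymm {a, b, c, d} 2 = a * b + a * c + a * d + b * c + b * d + c * d ∧
      Multiset.esymm {a, b, c, d} 3 = a * b * c + a * b * d + a * c * d + b * c * d := by
  simp only [Multiset.esymm, Multiset.insert_eq_cons, ← Multiset.cons_zero,
    Multiset.powersetCard_cons, Multiset.powersetCard_zero_left, Multiset.powersetCard_zero_right,
    Multiset.map_add, Multiset.map_cons, Multiset.map_zero, Multiset.sum_add, Multiset.sum_cons,
    Multiset.sum_zero, Multiset.prod_cons, Multiset.prod_zero]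
  refine ⟨?_, ?_, ?_⟩ <;> ring

end ElementarySymmetric

theorem IsSymmetricFamily.esymm_mem_range {k Ω ι : Type*} [Field k] [Field Ω] [Algebra k Ω]
    [Fintype ι] [IsGalois k Ω] {θ : ι → Ω} (hθ : IsSymmetricFamily k θ) (n : ℕ) :
    (Finset.univ.val.map θ).esymm n ∈ Set.range (algebraMap k Ω) := by
  rw [← aeval_esymm_eq_multiset_esymm ι k]
  exact hθ.aeval_mem_range (esymm_isSymmetric ι k n)

section PairDifference

variable {k Ω : Type*} [Field k] [Field Ω] [Algebra k Ω] {θ : Fin 4 → Ω}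

/-- The difference between `θ i + θ j` and the sum of the other two values. -/
def pairDifference (θ : Fin 4 → Ω) (i j : Fin 4) : Ω := 2 * (θ i + θ j) - ∑ l, θ l

theorem exists_pairDifference_eq_or_neg {i j : Fin 4} (hij : i ≠ j) : ∃ l : Fin 3,
    pairDifference θ i j = pairDifference θ 0 l.succ ∨
      pairDifference θ i j = -pairDifference θ 0 l.succ := by
  have comm (i j) : pairDifference θ i j = pairDifference θ j i := by
    rw [pairDifference, add_comm, pairDifference]
  have neg₂₃ : pairDifference θ 2 3 = -pairDifference θ 0 1 := by
    simp only [pairDifference, Fin.sum_univ_four]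
    ring
  have neg₁₃ : pairDifference θ 1 3 = -pairDifference θ 0 2 := by
    simp only [pairDifference, Fin.sum_univ_four]
    ring
  have neg₁₂ : pairDifference θ 1 2 = -pairDifference θ 0 3 := by
    simp only [pairDifference, Fin.sum_univ_four]
    ring
  rcases eq_or_ne i 0 with rfl | hi
  · obtain ⟨l, rfl⟩ := Fin.exists_succ_eq.2 hij.symm
    exact ⟨l, .inl rfl⟩
  rcases eq_or_ne j 0 with rfl | hj
  · obtain ⟨l, rfl⟩ := Fin.exists_succ_eq.2 hij
    exact ⟨l, .inl (comm _ _)⟩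
  obtain rfl | rfl | rfl : i = 1 ∨ i = 2 ∨ i = 3 := by omega
  all_goals obtain rfl | rfl | rfl : j = 1 ∨ j = 2 ∨ j = 3 := by omega
  exacts [absurd rfl hij, ⟨2, .inr neg₁₂⟩, ⟨1, .inr neg₁₃⟩, ⟨2, .inr ((comm _ _).trans neg₁₂)⟩,
    absurd rfl hij, ⟨0, .inr neg₂₃⟩, ⟨1, .inr ((comm _ _).trans neg₁₃)⟩,
    ⟨0, .inr ((comm _ _).trans neg₂₃)⟩, absurd rfl hij]

theorem resolventSums_pairDifference (i : Fin 4) :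
    resolventSums (pairDifference θ 0 1) (pairDifference θ 0 2) (pairDifference θ 0 3) i =
      4 * θ i - ∑ l, θ l := by
  fin_cases i <;> simp [resolventSums, pairDifference, Fin.sum_univ_four] <;> ring

theorem apply_pairDifference {σ : Gal(Ω/k)} {π : Equiv.Perm (Fin 4)} (h : ∀ i, σ (θ i) = θ (π i))
    (i j : Fin 4) : σ (pairDifference θ i j) = pairDifference θ (π i) (π j) := by
  simp only [pairDifference, map_sub, map_mul, map_add, map_sum, map_ofNat, h]
  rw [Equiv.sum_comp π θ]

theorem four_ne_zero_of_neZero_two [NeZero (2 : Ω)] : (4 : Ω) ≠ 0 := by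
  rw [show (4 : Ω) = 2 * 2 by norm_num]
  exact mul_ne_zero (NeZero.ne 2) (NeZero.ne 2)

namespace IsSymmetricFamily

variable [IsGalois k Ω]

theorem sum_mem_range (hθ : IsSymmetricFamily k θ) : ∑ l, θ l ∈ Set.range (algebraMap k Ω) := by
  rw [Fin.sum_univ_four, ← (esymm_four _ _ _ _).1]
  exact hθ.esymm_mem_range 1

theorem prod_pairDifference_mem_range (hθ : IsSymmetricFamily k θ) :
    pairDifference θ 0 1 * pairDifference θ 0 2 * pairDifference θ 0 3 ∈
      Set.range (algebraMap k Ω) := by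
  obtain ⟨e₁, h₁⟩ := hθ.esymm_mem_range 1
  obtain ⟨e₂, h₂⟩ := hθ.esymm_mem_range 2
  obtain ⟨e₃, h₃⟩ := hθ.esymm_mem_range 3
  replace h₁ := h₁.trans (esymm_four (θ 0) (θ 1) (θ 2) (θ 3)).1
  replace h₂ := h₂.trans (esymm_four (θ 0) (θ 1) (θ 2) (θ 3)).2.1
  replace h₃ := h₃.trans (esymm_four (θ 0) (θ 1) (θ 2) (θ 3)).2.2
  refine ⟨e₁ ^ 3 - 4 * e₁ * e₂ + 8 * e₃, ?_⟩
  simp only [map_add, map_sub, map_mul, map_pow, map_ofNat, h₁, h₂, h₃, pairDifference,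
    Fin.sum_univ_four]
  ring

variable [NeZero (2 : Ω)]

omit [IsGalois k Ω] in
theorem sq_pairDifference (hθ : IsSymmetricFamily k θ) :
    IsSymmetricFamily k fun l : Fin 3 ↦ pairDifference θ 0 l.succ ^ 2 where
  injective := by
    have hinj : Function.Injective (resolventSums (pairDifference θ 0 1) (pairDifference θ 0 2)
        (pairDifference θ 0 3)) := fun i j h ↦ hθ.injective <| by
      rw [resolventSums_pairDifference, resolventSums_pairDifference, sub_left_inj] at h
      exact mul_left_cancel₀ four_ne_zero_of_neZero_two h
    obtain ⟨h₁₂, h₂₃, h₃₁⟩ := resolventSums_injective_iff.1 hinj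
    refine Function.injective_iff_pairwise_ne.2 fun i j hij ↦ ?_
    fin_cases i <;> fin_cases j
    exacts [absurd rfl hij, h₁₂, h₃₁.symm, h₁₂.symm, absurd rfl hij, h₂₃, h₃₁, h₂₃.symm,
      absurd rfl hij]
  mem_range σ l := by
    obtain ⟨π, hπ⟩ := hθ.exists_perm σ
    obtain ⟨m, hm⟩ := exists_pairDifference_eq_or_neg (θ := θ) (π.injective.ne l.succ_ne_zero.symm)
    refine ⟨m, ?_⟩
    rw [map_pow, apply_pairDifference hπ]
    exact (sq_eq_sq_iff_eq_or_eq_neg.2 hm).symm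
  exists_gal π := by
    obtain ⟨σ, hσ⟩ := hθ.exists_gal (Equiv.Perm.decomposeFin.symm (0, π))
    refine ⟨σ, fun l ↦ ?_⟩
    rw [map_pow, apply_pairDifference hσ]
    simp

theorem adjoin_pairDifference (hθ : IsSymmetricFamily k θ) :
    adjoin k {pairDifference θ 0 1, pairDifference θ 0 2, pairDifference θ 0 3} =
      adjoin k (Set.range θ) := by
  obtain ⟨s, hs⟩ := hθ.sum_mem_range
  rw [← adjoin_range_resolventSums]
  refine le_antisymm (adjoin_le_iff.2 ?_) (adjoin_le_iff.2 ?_) <;> rintro _ ⟨i, rfl⟩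
  · rw [resolventSums_pairDifference, ← hs]
    exact sub_mem (mul_mem (ofNat_mem _ 4) (subset_adjoin k _ ⟨i, rfl⟩))
      (IntermediateField.algebraMap_mem _ s)
  · have h : θ i = (resolventSums (pairDifference θ 0 1) (pairDifference θ 0 2)
        (pairDifference θ 0 3) i + algebraMap k Ω s) / 4 := by
      rw [resolventSums_pairDifference, hs, sub_add_cancel,
        mul_div_cancel_left₀ _ four_ne_zero_of_neZero_two]
    rw [h]
    exact div_mem (add_mem (subset_adjoin k _ ⟨i, rfl⟩) (IntermediateField.algebraMap_mem _ s))
      (ofNat_mem _ 4)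

end IsSymmetricFamily
end PairDifference

section Resolvent
variable {k Ω : Type*} [Field k] [Field Ω] [Algebra k Ω] {p : Ω} {c t : Gal(Ω/k)}

theorem adjoin_eq_adjoin_of_eq_or_eq_neg {x y y' z z' : Ω} (hy : y = y' ∨ y = -y')
    (hz : z = z' ∨ z = -z') : adjoin k {x, y, z} = adjoin k {x, y', z'} := by
  have subset_iff (K : IntermediateField k Ω) :
      {x, y, z} ⊆ (K : Set Ω) ↔ {x, y', z'} ⊆ (K : Set Ω) := by
    rcases hy with rfl | rfl <;> rcases hz with rfl | rfl <;> simp [Set.insert_subset_iff]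
  exact le_antisymm (adjoin_le_iff.2 ((subset_iff _).2 (subset_adjoin k _)))
    (adjoin_le_iff.2 ((subset_iff _).1 (subset_adjoin k _)))

namespace IsSymmetricFamily

section Fin3

variable {a : Fin 3 → Ω} (ha : IsSymmetricFamily k a) (F : IsCubicFrame p c t) (hp : p ∈ k⟮a 0⟯)
include ha F hp

theorem translates_eq : c (a 0) = a 1 ∧ c (c (a 0)) = a 2 ∨
    c (a 0) = a 2 ∧ c (c (a 0)) = a 1 := by
  obtain ⟨i, hi⟩ := ha.mem_range c 0
  obtain ⟨j, hj⟩ := ha.mem_range (c * c) 0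
  have apply_p {σ τ : Gal(Ω/k)} (h : σ (a 0) = τ (a 0)) : σ p = τ p :=
    apply_eq_apply_of_mem_adjoin_simple h hp
  have hi₀ : i ≠ 0 := fun h ↦ F.c_ne (apply_p (τ := 1) (by rw [← hi, h, AlgEquiv.one_apply]))
  have hj₀ : j ≠ 0 := fun h ↦
    F.c_c_ne (apply_p (σ := c * c) (τ := 1) (by rw [← hj, h, AlgEquiv.one_apply]))
  have hij : i ≠ j := fun h ↦ F.c_ne (c.injective (apply_p (σ := c * c) (by rw [← hi, ← hj, h])))
  rw [AlgEquiv.mul_apply] at hj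
  rw [← hj, ← hi, ha.injective.eq_iff, ha.injective.eq_iff, ha.injective.eq_iff,
    ha.injective.eq_iff]
  omega

-- An automorphism that fixes `p` cannot move `a 0` to `c (a 0)` or to `c (c (a 0))`, for it would
-- then move `p` too.
theorem mem_adjoin_simple_of_mem [IsGalois k Ω] : a 0 ∈ k⟮p⟯ := by
  refine mem_adjoin_simple_iff_forall_fixed.2 fun σ hσ ↦ ?_
  have ne_c : σ (a 0) ≠ c (a 0) := fun h ↦
    F.c_ne ((apply_eq_apply_of_mem_adjoin_simple h hp).symm.trans hσ)
  have ne_c_c : σ (a 0) ≠ c (c (a 0)) := fun h ↦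
    F.c_c_ne ((apply_eq_apply_of_mem_adjoin_simple (τ := c * c) h hp).symm.trans hσ)
  obtain ⟨l, hl⟩ := ha.mem_range σ 0
  rw [← hl] at ne_c ne_c_c ⊢
  obtain rfl | rfl | rfl : l = 0 ∨ l = 1 ∨ l = 2 := by omega
  · rfl
  all_goals rcases ha.translates_eq F hp with ⟨h, h'⟩ | ⟨h, h'⟩ <;> simp_all

end Fin3

variable {θ : Fin 4 → Ω} [IsGalois k Ω] [NeZero (2 : Ω)] (hθ : IsSymmetricFamily k θ)
  (F : IsCubicFrame p c t) (hp : p ∈ k⟮pairDifference θ 0 1 ^ 2⟯)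
include hθ F hp

omit [IsGalois k Ω] in
theorem translates_pairDifference :
    (c (pairDifference θ 0 1) = pairDifference θ 0 2 ∨
      c (pairDifference θ 0 1) = -pairDifference θ 0 2) ∧
    (c (c (pairDifference θ 0 1)) = pairDifference θ 0 3 ∨
      c (c (pairDifference θ 0 1)) = -pairDifference θ 0 3) ∨
    (c (pairDifference θ 0 1) = pairDifference θ 0 3 ∨
      c (pairDifference θ 0 1) = -pairDifference θ 0 3) ∧
    (c (c (pairDifference θ 0 1)) = pairDifference θ 0 2 ∨
      c (c (pairDifference θ 0 1)) = -pairDifference θ 0 2) := by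
  simp only [← sq_eq_sq_iff_eq_or_eq_neg, ← map_pow]
  exact hθ.sq_pairDifference.translates_eq F hp

omit [IsGalois k Ω] in
theorem pairDifference_notMem : pairDifference θ 0 1 ∉ k⟮p⟯ := by
  set x := pairDifference θ 0 1 with hx
  intro hxp
  obtain ⟨σ, hσ⟩ := hθ.exists_gal (.swap 0 2 * .swap 1 3)
  have hσx : σ x = -x := by
    rw [apply_pairDifference hσ]
    rw [show (Equiv.swap 0 2 * .swap 1 3 : Equiv.Perm (Fin 4)) 0 = 2 by decide,
      show (Equiv.swap 0 2 * .swap 1 3 : Equiv.Perm (Fin 4)) 1 = 3 by decide, hx]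
    simp only [pairDifference, Fin.sum_univ_four]
    ring
  have hσp : σ p = p := apply_eq_apply_of_mem_adjoin_simple (τ := 1)
    (by rw [map_pow, hσx, neg_sq, AlgEquiv.one_apply]) hp
  have hx₀ : x = 0 := eq_zero_of_neg_eq_self <|
    hσx.symm.trans (apply_eq_apply_of_mem_adjoin_simple (τ := 1) hσp hxp)
  refine F.c_ne (apply_eq_apply_of_mem_adjoin_simple (τ := 1) ?_ hp)
  rw [hx₀, zero_pow two_ne_zero, map_zero, map_zero]

theorem isResolventRoot_pairDifference : IsResolventRoot p c (pairDifference θ 0 1) where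
  sq_mem := hθ.sq_pairDifference.mem_adjoin_simple_of_mem F hp
  notMem := hθ.pairDifference_notMem F hp
  cubicNorm_mem := by
    obtain ⟨q, hq⟩ := hθ.prod_pairDifference_mem_range
    have : cubicNorm c (pairDifference θ 0 1) = algebraMap k Ω q ∨
        cubicNorm c (pairDifference θ 0 1) = algebraMap k Ω (-q) := by
      rw [map_neg, hq, cubicNorm_apply]
      rcases hθ.translates_pairDifference F hp with ⟨h | h, h' | h'⟩ | ⟨h | h, h' | h'⟩ <;>
        rw [h', h] <;> simp [mul_right_comm]
    exact this.elim (fun h ↦ ⟨q, h.symm⟩) fun h ↦ ⟨-q, h.symm⟩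

theorem resolventField_pairDifference :
    resolventField c (pairDifference θ 0 1) = adjoin k (Set.range θ) := by
  rw [← hθ.adjoin_pairDifference, resolventField]
  rcases hθ.translates_pairDifference F hp with ⟨h, h'⟩ | ⟨h, h'⟩
  · exact adjoin_eq_adjoin_of_eq_or_eq_neg h h'
  · rw [Set.pair_comm (pairDifference θ 0 2)]
    exact adjoin_eq_adjoin_of_eq_or_eq_neg h h'

end IsSymmetricFamily

theorem IsSymmetricExtension.exists_isResolventRoot [IsGalois k Ω] [NeZero (2 : Ω)]
    (F : IsCubicFrame p c t)
    (hcubic : ∀ a : Fin 3 → Ω, IsSymmetricFamily k a → ∃ q ∈ k⟮a 0⟯, ∃ ρ : Gal(Ω/k), ρ q = p)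
    {E : IntermediateField k Ω} (hE : IsSymmetricExtension (Fin 4) E) :
    ∃ g, IsResolventRoot p c g ∧ resolventField c g = E := by
  obtain ⟨θ, hθ, rfl⟩ := hE.exists_isSymmetricFamily
  obtain ⟨q, hq, ρ, rfl⟩ := hcubic _ hθ.sq_pairDifference
  obtain ⟨π, hπ⟩ := hθ.exists_perm ρ
  have hp : ρ q ∈ k⟮pairDifference (θ ∘ π) 0 1 ^ 2⟯ := by
    have : pairDifference (θ ∘ π) 0 1 = ρ (pairDifference θ 0 1) := by
      rw [apply_pairDifference hπ]
      simp only [pairDifference, Function.comp_apply, Equiv.sum_comp π θ]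
    have hmap := (IntermediateField.mem_map _ (f := (ρ : Ω →ₐ[k] Ω))).2 ⟨q, hq, rfl⟩
    rw [adjoin_map, Set.image_singleton] at hmap
    rw [this, ← map_pow]
    exact hmap
  have hθ' := hθ.comp_perm π
  refine ⟨_, hθ'.isResolventRoot_pairDifference F hp, ?_⟩
  rw [hθ'.resolventField_pairDifference F hp, π.surjective.range_comp]

end Resolvent

section Ultrametric

section Group
variable {G : Type*} [SeminormedAddCommGroup G] [IsUltrametricDist G] {x y z : G} {r : ℝ}

theorem norm_add_lt_of_lt (hx : ‖x‖ < r) (hy : ‖y‖ < r) : ‖x + y‖ < r :=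
  (IsUltrametricDist.norm_add_le_max x y).trans_lt (max_lt hx hy)

theorem norm_add_le_of_le_of_le (hx : ‖x‖ ≤ r) (hy : ‖y‖ ≤ r) : ‖x + y‖ ≤ r :=
  (IsUltrametricDist.norm_add_le_max x y).trans (max_le hx hy)

theorem norm_sub_lt_of_lt (hx : ‖x‖ < r) (hy : ‖y‖ < r) : ‖x - y‖ < r :=
  sub_eq_add_neg x y ▸ norm_add_lt_of_lt hx (by rwa [norm_neg])

theorem norm_sub_lt_trans (hxy : ‖x - y‖ < r) (hyz : ‖y - z‖ < r) : ‖x - z‖ < r := by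
  simpa only [sub_add_sub_cancel] using norm_add_lt_of_lt hxy hyz

theorem norm_eq_of_norm_sub_lt (h : ‖x - y‖ < ‖y‖) : ‖x‖ = ‖y‖ := by
  have := IsUltrametricDist.norm_add_eq_max_of_norm_ne_norm h.ne
  rwa [sub_add_cancel, max_eq_right h.le] at this

end Group

section Field
variable {K : Type*} [NormedField K] [IsUltrametricDist K] {x y : K} {r : ℝ}

theorem norm_eq_one_of_norm_sub_one_lt (h : ‖x - 1‖ < 1) : ‖x‖ = 1 := by
  rw [← norm_one (α := K)] at h
  rw [norm_eq_of_norm_sub_lt h, norm_one]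

theorem norm_mul_sub_one_lt (hx : ‖x - 1‖ < r) (hy : ‖y - 1‖ < r) (hr : r ≤ 1) :
    ‖x * y - 1‖ < r := by
  refine norm_sub_lt_trans (y := x) ?_ hx
  rwa [← mul_sub_one, norm_mul, norm_eq_one_of_norm_sub_one_lt (hx.trans_le hr), one_mul]

theorem norm_inv_sub_one (hx : ‖x - 1‖ < 1) : ‖x⁻¹ - 1‖ = ‖x - 1‖ := by
  have hx₁ := norm_eq_one_of_norm_sub_one_lt hx
  have hx₀ : x ≠ 0 := norm_ne_zero_iff.1 (hx₁ ▸ one_ne_zero)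
  rw [← div_one ‖x - 1‖, ← hx₁, ← norm_div, sub_div, div_self hx₀, one_div, norm_sub_rev]

theorem norm_div_sub_one_lt (hx : ‖x - 1‖ < r) (hy : ‖y - 1‖ < r) (hr : r ≤ 1) :
    ‖x / y - 1‖ < r := by
  rw [div_eq_mul_inv]
  exact norm_mul_sub_one_lt hx ((norm_inv_sub_one (hy.trans_le hr)).trans_lt hy) hr

theorem norm_eq_of_norm_div_sub_one_lt (h : ‖x / y - 1‖ < 1) : ‖x‖ = ‖y‖ := by
  have := norm_eq_one_of_norm_sub_one_lt h
  rw [norm_div] at this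
  exact (div_eq_one_iff_eq (div_ne_zero_iff.1 (this ▸ one_ne_zero)).2).1 this

omit [IsUltrametricDist K] in
theorem norm_sub_lt_iff_norm_div_sub_one_lt (hy : y ≠ 0) : ‖x - y‖ < ‖y‖ ↔ ‖x / y - 1‖ < 1 := by
  rw [div_sub_one hy, norm_div, div_lt_one (norm_pos_iff.2 hy)]

end Field
end Ultrametric

section Roots
variable {Ω : Type*} [NormedField Ω]

theorem exists_pow_eq_of_norm_sub_one_lt [IsAlgClosed Ω] {n : ℕ} (hn : n ≠ 0) {u : Ω} {δ : ℝ}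
    (hδ : 0 ≤ δ) (hu : ‖u - 1‖ < δ ^ n) : ∃ r : Ω, r ^ n = u ∧ ‖r - 1‖ < δ := by
  set f : Polynomial Ω := .X ^ n - .C u
  have hf : f.Monic := Polynomial.monic_X_pow_sub_C u hn
  have heval := (IsAlgClosed.splits f).eval_eq_prod_roots_of_monic hf 1
  by_contra! h
  refine hu.not_ge ?_
  calc δ ^ n = (f.roots.map fun _ ↦ δ).prod := by
        rw [Multiset.map_const', Multiset.prod_replicate,
          ← (IsAlgClosed.splits f).natDegree_eq_card_roots, Polynomial.natDegree_X_pow_sub_C]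
    _ ≤ (f.roots.map fun r ↦ ‖1 - r‖).prod := by
        refine Multiset.prod_map_le_prod_map₀ _ _ (fun _ _ ↦ hδ) fun r hr ↦ ?_
        rw [norm_sub_rev]
        refine h r ?_
        simpa [f, sub_eq_zero] using Polynomial.isRoot_of_mem_roots hr
    _ = ‖u - 1‖ := by
        rw [norm_sub_rev, show 1 - u = f.eval 1 by simp [f], heval]
        exact Multiset.prod_hom' _ (normHom : Ω →*₀ ℝ) _

end Roots

section Galois
variable {K Ω : Type*} [NontriviallyNormedField K] [CompleteSpace K] [IsUltrametricDist K]
  [NormedField Ω] [NormedAlgebra K Ω] [IsUltrametricDist Ω]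

omit [IsUltrametricDist Ω] in
theorem norm_algEquiv_apply [Algebra.IsAlgebraic K Ω] (σ : Gal(Ω/K)) (x : Ω) : ‖σ x‖ = ‖x‖ := by
  rw [NormedAlgebra.norm_eq_spectralNorm K, NormedAlgebra.norm_eq_spectralNorm K]
  exact (spectralNorm_eq_of_equiv σ x).symm

-- A conjugate of `r` over `L` differs from it by a root of unity close to `1`.
theorem mem_of_pow_mem_of_norm_sub_one_lt [IsGalois K Ω] {L : IntermediateField K Ω} {n : ℕ}
    {r : Ω} {δ : ℝ} (hδ : δ ≤ 1) (hn : ∀ ζ : Ω, ζ ^ n = 1 → ‖ζ - 1‖ < δ → ζ = 1)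
    (hr : ‖r - 1‖ < δ) (hrn : r ^ n ∈ L) : r ∈ L := by
  have hr₀ : r ≠ 0 := norm_ne_zero_iff.1 <|
    (norm_eq_one_of_norm_sub_one_lt (hr.trans_le hδ)) ▸ one_ne_zero
  rw [← adjoin_self K L] at hrn ⊢
  refine mem_adjoin_iff_forall_fixed.2 fun σ hσ ↦ ?_
  have hσn : σ r ^ n = r ^ n := by
    rw [← map_pow]
    exact mem_adjoin_iff_forall_fixed.1 hrn σ hσ
  have hσr : ‖σ r - 1‖ < δ := by
    rwa [← map_one σ, ← map_sub, norm_algEquiv_apply]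
  rw [← div_eq_one_iff_eq hr₀]
  refine hn _ ?_ (norm_div_sub_one_lt hσr hr hδ)
  rw [div_pow, hσn, div_self (pow_ne_zero n hr₀)]

theorem exists_mem_pow_eq_of_norm_sub_one_lt [IsAlgClosed Ω] [IsGalois K Ω]
    {L : IntermediateField K Ω} {n : ℕ} (hn : n ≠ 0) {u : Ω} {δ : ℝ} (hδ₀ : 0 ≤ δ) (hδ : δ ≤ 1)
    (hroots : ∀ ζ : Ω, ζ ^ n = 1 → ‖ζ - 1‖ < δ → ζ = 1) (hu : ‖u - 1‖ < δ ^ n) (huL : u ∈ L) :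
    ∃ r ∈ L, r ^ n = u ∧ ‖r - 1‖ < δ := by
  obtain ⟨r, rfl, hr⟩ := exists_pow_eq_of_norm_sub_one_lt hn hδ₀ hu
  exact ⟨r, mem_of_pow_mem_of_norm_sub_one_lt hδ hroots hr huL, rfl, hr⟩

end Galois

section Two
variable {Ω : Type*} [NormedField Ω] [NormedAlgebra ℚ_[2] Ω]

theorem norm_two_eq : ‖(2 : Ω)‖ = 1 / 2 := by
  rw [← map_ofNat (algebraMap ℚ_[2] Ω) 2, norm_algebraMap']
  simpa using Padic.norm_p (p := 2)

theorem eq_one_of_sq_eq_one {ζ : Ω} (h : ζ ^ 2 = 1) (hlt : ‖ζ - 1‖ < 1 / 2) : ζ = 1 := by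
  refine (sq_eq_one_iff.1 h).resolve_right ?_
  rintro rfl
  rw [← norm_neg, show -(-1 - 1 : Ω) = 2 by norm_num, norm_two_eq] at hlt
  exact hlt.false

variable [IsUltrametricDist Ω]

theorem norm_three_eq : ‖(3 : Ω)‖ = 1 := by
  refine norm_eq_one_of_norm_sub_one_lt ?_
  rw [show (3 - 1 : Ω) = 2 by norm_num, norm_two_eq]
  norm_num

theorem eq_one_of_pow_three_eq_one {ζ : Ω} (h : ζ ^ 3 = 1) (hlt : ‖ζ - 1‖ < 1) : ζ = 1 := by
  by_contra hne
  have hsq : (ζ - 1) ^ 2 = -(3 * ζ) :=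
    mul_left_cancel₀ (sub_ne_zero.2 hne) (by linear_combination h)
  have := congrArg norm hsq
  rw [norm_pow, norm_neg, norm_mul, norm_three_eq, norm_eq_one_of_norm_sub_one_lt hlt] at this
  nlinarith [norm_nonneg (ζ - 1)]

variable [IsAlgClosed Ω] [IsGalois ℚ_[2] Ω] {L : IntermediateField ℚ_[2] Ω} {u : Ω}

theorem exists_mem_sq_eq (hu : ‖u - 1‖ < 1 / 4) (huL : u ∈ L) : ∃ r ∈ L, r ^ 2 = u :=
  let ⟨r, hrL, hr, _⟩ := exists_mem_pow_eq_of_norm_sub_one_lt two_ne_zero one_half_pos.le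
    one_half_lt_one.le (fun _ ↦ eq_one_of_sq_eq_one) (by norm_num [hu]) huL
  ⟨r, hrL, hr⟩

theorem exists_mem_pow_three_eq (hu : ‖u - 1‖ < 1) (huL : u ∈ L) :
    ∃ r ∈ L, r ^ 3 = u ∧ ‖r - 1‖ < 1 :=
  exists_mem_pow_eq_of_norm_sub_one_lt three_ne_zero zero_le_one le_rfl
    (fun _ ↦ eq_one_of_pow_three_eq_one) (by rwa [one_pow]) huL

end Two

section Residue

variable {x : ℚ_[2]}

theorem norm_lt_one_or_norm_sub_one_lt (hx : ‖x‖ ≤ 1) : ‖x‖ < 1 ∨ ‖x - 1‖ < 1 := by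
  obtain ⟨x, rfl⟩ : ∃ y : ℤ_[2], (y : ℚ_[2]) = x := ⟨⟨x, hx⟩, rfl⟩
  obtain ⟨n, hn, hmem⟩ := PadicInt.exists_mem_range x
  rw [IsLocalRing.mem_maximalIdeal, PadicInt.mem_nonunits, PadicInt.norm_def, PadicInt.coe_sub,
    PadicInt.coe_natCast] at hmem
  interval_cases n
  · exact .inl (by simpa using hmem)
  · exact .inr (by simpa using hmem)

theorem norm_sub_one_lt_of_norm_eq_one (hx : ‖x‖ = 1) : ‖x - 1‖ < 1 :=
  (norm_lt_one_or_norm_sub_one_lt hx.le).resolve_left hx.not_lt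

theorem norm_sq_sub_self_lt_one (hx : ‖x‖ ≤ 1) : ‖x ^ 2 - x‖ < 1 := by
  rw [show x ^ 2 - x = x * (x - 1) by ring, norm_mul]
  rcases norm_lt_one_or_norm_sub_one_lt hx with h | h
  · refine mul_lt_one_of_nonneg_of_lt_one_left (norm_nonneg x) h ?_
    rw [sub_eq_add_neg]
    exact norm_add_le_of_le_of_le hx (by rw [norm_neg, norm_one])
  · exact mul_lt_one_of_nonneg_of_lt_one_right hx (norm_nonneg _) h

theorem exists_norm_div_two_zpow_sub_one_lt (hx : x ≠ 0) : ∃ m : ℤ, ‖x / 2 ^ m - 1‖ < 1 := by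
  refine ⟨x.valuation, norm_sub_one_lt_of_norm_eq_one ?_⟩
  rw [norm_div, norm_zpow, norm_two_eq, Padic.norm_eq_zpow_neg_valuation hx, one_div, inv_zpow',
    Nat.cast_ofNat]
  exact div_self (zpow_ne_zero _ two_ne_zero)

end Residue

section Cubic

section General
variable {K Ω ι : Type*} [NontriviallyNormedField K] [CompleteSpace K] [IsUltrametricDist K]
  [NormedField Ω] [NormedAlgebra K Ω] [Algebra.IsAlgebraic K Ω] {θ : ι → Ω}

namespace IsSymmetricFamily

theorem norm_eq (hθ : IsSymmetricFamily K θ) (i j : ι) : ‖θ i‖ = ‖θ j‖ := by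
  classical
  obtain ⟨σ, hσ⟩ := hθ.exists_gal (.swap i j)
  rw [← norm_algEquiv_apply σ, hσ, Equiv.swap_apply_left]

theorem norm_sub_eq_norm_sub (hθ : IsSymmetricFamily K θ) {i j l : ι} (hij : i ≠ j) (hil : i ≠ l) :
    ‖θ i - θ j‖ = ‖θ i - θ l‖ := by
  classical
  obtain ⟨σ, hσ⟩ := hθ.exists_gal (.swap j l)
  rw [← norm_algEquiv_apply σ, map_sub, hσ, hσ, Equiv.swap_apply_of_ne_of_ne hij hil,
    Equiv.swap_apply_left]

theorem norm_sub_le_max (hθ : IsSymmetricFamily K θ) [IsUltrametricDist Ω] (i j : ι) :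
    ‖θ i - θ j‖ ≤ ‖θ i‖ := by
  rw [sub_eq_add_neg]
  exact norm_add_le_of_le_of_le le_rfl (by rw [norm_neg, hθ.norm_eq j i])

theorem norm_sub_eq_of_sum_eq_zero [IsUltrametricDist Ω] [Fintype ι] (hθ : IsSymmetricFamily K θ)
    (hcard : ‖(Fintype.card ι : Ω)‖ = 1) (hsum : ∑ i, θ i = 0) {i j : ι} (hij : i ≠ j) :
    ‖θ i - θ j‖ = ‖θ i‖ := by
  refine (hθ.norm_sub_le_max i j).antisymm ?_
  calc ‖θ i‖ = ‖∑ l, (θ i - θ l)‖ := by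
        rw [Finset.sum_sub_distrib, hsum, sub_zero, Finset.sum_const, Finset.card_univ,
          nsmul_eq_mul, norm_mul, hcard, one_mul]
    _ ≤ ‖θ i - θ j‖ := by
        refine IsUltrametricDist.norm_sum_le_of_forall_le_of_nonneg (norm_nonneg _) fun l _ ↦ ?_
        rcases eq_or_ne i l with rfl | hil
        · rw [sub_self, norm_zero]
          exact norm_nonneg _
        · rw [hθ.norm_sub_eq_norm_sub hij hil]

end IsSymmetricFamily
end General

namespace IsSymmetricFamily

variable {Ω : Type*} [NormedField Ω] [NormedAlgebra ℚ_[2] Ω] [IsUltrametricDist Ω]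
  [IsGalois ℚ_[2] Ω] {a : Fin 3 → Ω}
  (ha : IsSymmetricFamily ℚ_[2] a) (hsum : ∑ i, a i = 0)
include ha hsum

theorem norm_prod_sq_sub_lt (h₁ : ‖a 0‖ = 1) : ‖∏ i, (a 0 ^ 2 - a i)‖ < 1 := by
  have norm_mul_eq (i j) : ‖a i * a j‖ = 1 := by
    rw [norm_mul, ha.norm_eq i 0, ha.norm_eq j 0, h₁, mul_one]
  obtain ⟨e₂, h₂⟩ := ha.esymm_mem_range 2
  obtain ⟨e₃, h₃⟩ := ha.esymm_mem_range 3
  replace h₂ := h₂.trans (esymm_three (a 0) (a 1) (a 2)).2.1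
  replace h₃ := h₃.trans (esymm_three (a 0) (a 1) (a 2)).2.2
  have he₂ : ‖e₂‖ ≤ 1 := by
    rw [← norm_algebraMap' Ω, h₂]
    exact norm_add_le_of_le_of_le (norm_add_le_of_le_of_le (norm_mul_eq 0 1).le
      (norm_mul_eq 0 2).le) (norm_mul_eq 1 2).le
  have he₃ : ‖e₃‖ = 1 := by
    rw [← norm_algebraMap' Ω, h₃, norm_mul, norm_mul_eq, ha.norm_eq 2 0, h₁, mul_one]
  have hprod : ∏ i, (a 0 ^ 2 - a i) = algebraMap ℚ_[2] Ω (e₃ ^ 2 - e₃) +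
      algebraMap ℚ_[2] Ω ((-e₂) ^ 2 - (-e₂)) * a 0 ^ 2 -
      2 * (algebraMap ℚ_[2] Ω (e₂ * e₃) * a 0) := by
    rw [Fin.sum_univ_three] at hsum
    rw [Fin.prod_univ_three]
    simp only [map_sub, map_pow, map_mul, map_neg, h₂, h₃]
    rw [show a 2 = -a 0 - a 1 by linear_combination hsum]
    ring
  rw [hprod]
  refine norm_sub_lt_of_lt (norm_add_lt_of_lt ?_ ?_) ?_
  · rw [norm_algebraMap']
    exact norm_sq_sub_self_lt_one he₃.le
  · rw [norm_mul, norm_algebraMap', norm_pow, h₁, one_pow, mul_one]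
    exact norm_sq_sub_self_lt_one (by rwa [norm_neg])
  · rw [norm_mul, norm_two_eq, norm_mul, norm_algebraMap', norm_mul, he₃, h₁]
    linarith

theorem norm_sq_sub_self_lt (h₁ : ‖a 0‖ = 1) : ‖a 0 ^ 2 - a 0‖ < 1 := by
  obtain ⟨i, hi⟩ : ∃ i, ‖a 0 ^ 2 - a i‖ < 1 := by
    by_contra! h
    refine (ha.norm_prod_sq_sub_lt hsum h₁).not_ge ?_
    rw [norm_prod]
    exact Finset.one_le_prod fun i _ ↦ h i
  rcases eq_or_ne i 0 with rfl | hi₀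
  · exact hi
  obtain ⟨j, hj₀, hij⟩ : ∃ j, j ≠ 0 ∧ i ≠ j := by
    clear hi
    decide +revert
  obtain ⟨σ, hσ⟩ := ha.exists_gal (.swap i j)
  have hj : ‖a j - a 0 ^ 2‖ < 1 := by
    rwa [← norm_algEquiv_apply σ, map_sub, map_pow, hσ, hσ, Equiv.swap_apply_left,
      Equiv.swap_apply_of_ne_of_ne hi₀.symm hj₀.symm, norm_sub_rev] at hi
  have := norm_sub_lt_trans hj hi
  rw [norm_sub_rev, ha.norm_sub_eq_of_sum_eq_zero (by simpa using norm_three_eq) hsum hij,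
    ha.norm_eq i 0, h₁] at this
  exact absurd this (lt_irrefl 1)

-- The residue of a root is its own square, so it is `1`; but the roots have distinct residues.
theorem norm_ne_one : ‖a 0‖ ≠ 1 := by
  intro h₁
  have sub_one_lt : ‖a 0 - 1‖ < 1 := by
    have := ha.norm_sq_sub_self_lt hsum h₁
    rwa [show a 0 ^ 2 - a 0 = a 0 * (a 0 - 1) by ring, norm_mul, h₁, one_mul] at this
  obtain ⟨σ, hσ⟩ := ha.exists_gal (.swap 0 1)
  have sub_one_lt' : ‖1 - a 1‖ < 1 := by
    rwa [← norm_algEquiv_apply σ, map_sub, hσ, map_one, norm_sub_rev] at sub_one_lt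
  have := norm_sub_lt_trans sub_one_lt sub_one_lt'
  rw [ha.norm_sub_eq_of_sum_eq_zero (by simpa using norm_three_eq) hsum Fin.zero_ne_one, h₁] at this
  exact this.false

theorem norm_ne_norm (α : ℚ_[2]) : ‖a 0‖ ≠ ‖α‖ := by
  intro h
  have hα : α ≠ 0 := by
    rintro rfl
    have hzero (i) : a i = 0 := by rw [← norm_eq_zero, ha.norm_eq i 0, h, norm_zero]
    exact absurd (ha.injective ((hzero 0).trans (hzero 1).symm)) Fin.zero_ne_one
  refine (ha.algebraMap_mul (inv_ne_zero hα)).norm_ne_one ?_ ?_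
  · rw [← Finset.mul_sum, hsum, mul_zero]
  · rw [norm_mul, norm_algebraMap', norm_inv, h, inv_mul_cancel₀ (norm_ne_zero_iff.2 hα)]

-- The quadratic coefficient is too small for the Newton polygon, for otherwise the norm of `a 0`
-- would be that of an element of `ℚ_[2]`.
theorem norm_pow_three_sub_lt {e : ℚ_[2]} (he : algebraMap ℚ_[2] Ω e = a 0 * a 1 * a 2) :
    ‖a 0 ^ 3 - algebraMap ℚ_[2] Ω e‖ < ‖a 0‖ ^ 3 := by
  obtain ⟨e₂, h₂⟩ := ha.esymm_mem_range 2
  replace h₂ := h₂.trans (esymm_three (a 0) (a 1) (a 2)).2.1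
  have hr₀ : ‖a 0‖ ≠ 0 := by simpa using ha.norm_ne_norm hsum 0
  have norm_mul_eq (i j) : ‖a i * a j‖ = ‖a 0‖ ^ 2 := by
    rw [norm_mul, ha.norm_eq i 0, ha.norm_eq j 0, sq]
  have he' : ‖e‖ = ‖a 0‖ ^ 3 := by
    rw [← norm_algebraMap' Ω, he, norm_mul, norm_mul_eq, ha.norm_eq 2 0]
    ring
  have hne : ‖e₂‖ ≠ ‖a 0‖ ^ 2 := by
    intro h
    refine ha.norm_ne_norm hsum (e / e₂) ?_
    rw [norm_div, he', h, pow_succ, mul_div_cancel_left₀ _ (pow_ne_zero 2 hr₀)]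
  have hle : ‖e₂‖ ≤ ‖a 0‖ ^ 2 := by
    rw [← norm_algebraMap' Ω, h₂]
    exact norm_add_le_of_le_of_le (norm_add_le_of_le_of_le (norm_mul_eq 0 1).le
      (norm_mul_eq 0 2).le) (norm_mul_eq 1 2).le
  have hcubic : a 0 ^ 3 - algebraMap ℚ_[2] Ω e = -(algebraMap ℚ_[2] Ω e₂ * a 0) := by
    rw [Fin.sum_univ_three] at hsum
    rw [he, h₂]
    linear_combination a 0 ^ 2 * hsum
  rw [hcubic, norm_neg, norm_mul, norm_algebraMap', pow_succ]
  exact mul_lt_mul_of_pos_right (hle.lt_of_ne hne) (lt_of_le_of_ne (norm_nonneg _) hr₀.symm)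

theorem exists_norm_pow_three_div_sub_one_lt :
    ∃ m : ℤ, ¬ 3 ∣ m ∧ ‖a 0 ^ 3 / 2 ^ m - 1‖ < 1 := by
  obtain ⟨e, he⟩ := ha.esymm_mem_range 3
  replace he := he.trans (esymm_three (a 0) (a 1) (a 2)).2.2
  have hr₀ : ‖a 0‖ ≠ 0 := by simpa using ha.norm_ne_norm hsum 0
  have he' : ‖algebraMap ℚ_[2] Ω e‖ = ‖a 0‖ ^ 3 := by
    rw [he, norm_mul, norm_mul, ha.norm_eq 1 0, ha.norm_eq 2 0]
    ring
  have he₀ : algebraMap ℚ_[2] Ω e ≠ 0 := norm_ne_zero_iff.1 (he' ▸ pow_ne_zero 3 hr₀)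
  obtain ⟨m, hm⟩ := exists_norm_div_two_zpow_sub_one_lt (x := e)
    fun h ↦ he₀ (by rw [h, map_zero])
  rw [← norm_algebraMap' Ω] at hm
  simp only [map_sub, map_div₀, map_zpow₀, map_ofNat, map_one] at hm
  have hlt : ‖a 0 ^ 3 / 2 ^ m - 1‖ < 1 := by
    rw [← div_mul_div_cancel₀ he₀]
    refine norm_mul_sub_one_lt ?_ hm le_rfl
    rw [← norm_sub_lt_iff_norm_div_sub_one_lt he₀, he']
    exact ha.norm_pow_three_sub_lt hsum he
  refine ⟨m, ?_, hlt⟩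
  rintro ⟨n, rfl⟩
  refine ha.norm_ne_norm hsum (2 ^ n) <|
    (pow_left_inj₀ (norm_nonneg _) (norm_nonneg _) three_ne_zero).1 ?_
  rw [← norm_pow, norm_eq_of_norm_div_sub_one_lt hlt, mul_comm, zpow_mul, zpow_ofNat, norm_pow,
    norm_zpow, norm_zpow, norm_two_eq, norm_two_eq]

theorem exists_pow_three_eq_two_mul :
    ∃ b ∈ ℚ_[2]⟮a 0⟯, ∃ u : Ω, ‖u - 1‖ < 1 ∧ b ^ 3 = 2 * u := by
  obtain ⟨m, hm, hlt⟩ := ha.exists_norm_pow_three_div_sub_one_lt hsum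
  have ha₀ : a 0 ∈ ℚ_[2]⟮a 0⟯ := mem_adjoin_simple_self _ _
  have h2 (n : ℤ) : (2 : Ω) ^ n ∈ ℚ_[2]⟮a 0⟯ := zpow_mem (ofNat_mem _ 2) n
  have := charZero_of_injective_algebraMap (algebraMap ℚ_[2] Ω).injective
  obtain ⟨n, rfl | rfl⟩ : ∃ n, m = n * 3 + 1 ∨ m = n * 3 + 2 := ⟨m / 3, by lia⟩
  · refine ⟨a 0 / 2 ^ n, div_mem ha₀ (h2 n), _, hlt, ?_⟩
    rw [div_pow, zpow_add₀ two_ne_zero, zpow_one, zpow_mul]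
    field_simp
  · refine ⟨a 0 ^ 2 / 2 ^ (2 * n + 1), div_mem (pow_mem ha₀ 2) (h2 _), _,
      norm_mul_sub_one_lt hlt hlt le_rfl, ?_⟩
    rw [zpow_add₀ two_ne_zero, mul_comm 2 n, zpow_mul, zpow_add₀ two_ne_zero, zpow_mul]
    simp only [zpow_ofNat]
    field_simp

theorem exists_pow_three_eq_two_of_sum_eq_zero [IsAlgClosed Ω] : ∃ q ∈ ℚ_[2]⟮a 0⟯, q ^ 3 = 2 := by
  obtain ⟨b, hb, u, hu, hbu⟩ := ha.exists_pow_three_eq_two_mul hsum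
  have := charZero_of_injective_algebraMap (algebraMap ℚ_[2] Ω).injective
  have huL : u ∈ ℚ_[2]⟮a 0⟯ := by
    rw [← mul_div_cancel_left₀ u two_ne_zero, ← hbu]
    exact div_mem (pow_mem hb 3) (ofNat_mem _ 2)
  obtain ⟨r, hr, rfl, hr₁⟩ := exists_mem_pow_three_eq hu huL
  have hr₀ : r ≠ 0 := norm_ne_zero_iff.1 (norm_eq_one_of_norm_sub_one_lt hr₁ ▸ one_ne_zero)
  refine ⟨b / r, div_mem hb hr, ?_⟩
  rw [div_pow, hbu, mul_div_cancel_right₀ _ (pow_ne_zero 3 hr₀)]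

omit hsum in
theorem exists_pow_three_eq_two [IsAlgClosed Ω] : ∃ q ∈ ℚ_[2]⟮a 0⟯, q ^ 3 = 2 := by
  obtain ⟨e₁, h₁⟩ := ha.esymm_mem_range 1
  replace h₁ := h₁.trans (esymm_three (a 0) (a 1) (a 2)).1
  have hcentred := ha.sub_algebraMap (e₁ / 3)
  obtain ⟨q, hq, hq₂⟩ := hcentred.exists_pow_three_eq_two_of_sum_eq_zero (by
    have := charZero_of_injective_algebraMap (algebraMap ℚ_[2] Ω).injective
    simp only [Fin.sum_univ_three, map_div₀, map_ofNat, h₁]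
    field_simp
    ring)
  refine ⟨q, adjoin_simple_le_iff.2 ?_ hq, hq₂⟩
  exact sub_mem (mem_adjoin_simple_self _ _) (IntermediateField.algebraMap_mem _ _)

end IsSymmetricFamily
end Cubic

section PureCubic
variable {k Ω : Type*} [Field k] [Field Ω] [Algebra k Ω] {p w : Ω} {q : k}

theorem exists_algEquiv_of_pow_three_eq [Normal k Ω] (hq : ∀ r : k, r ^ 3 ≠ q) {x y : Ω}
    (hx : x ^ 3 = algebraMap k Ω q) (hy : y ^ 3 = algebraMap k Ω q) :
    ∃ σ : Gal(Ω/k), σ x = y := by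
  have minpoly_eq {z : Ω} (hz : z ^ 3 = algebraMap k Ω q) : minpoly k z = .X ^ 3 - .C q :=
    (minpoly.eq_of_irreducible_of_monic (X_pow_sub_C_irreducible_of_prime Nat.prime_three hq)
      (by simp [hz]) (Polynomial.monic_X_pow_sub_C q three_ne_zero)).symm
  exact IsConjRoot.exists_algEquiv (by rw [isConjRoot_def, minpoly_eq hx, minpoly_eq hy])

theorem exists_eq_add_mul_add_mul_sq [Algebra.IsAlgebraic k Ω] (hp : p ^ 3 = algebraMap k Ω q)
    {x : Ω} (hx : x ∈ k⟮p⟯) :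
    ∃ a b e : k, x = algebraMap k Ω a + algebraMap k Ω b * p + algebraMap k Ω e * p ^ 2 := by
  rw [← mem_toSubalgebra,
    adjoin_simple_toSubalgebra_of_isAlgebraic (Algebra.IsAlgebraic.isAlgebraic p),
    Algebra.adjoin_singleton_eq_range_aeval] at hx
  obtain ⟨f, rfl⟩ := hx
  set g : Polynomial k := .X ^ 3 - .C q
  have hg : g.Monic := Polynomial.monic_X_pow_sub_C q three_ne_zero
  have hg₃ : g.natDegree = 3 := Polynomial.natDegree_X_pow_sub_C
  have hdeg : (f %ₘ g).natDegree < 3 := hg₃ ▸ Polynomial.natDegree_modByMonic_lt f hg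
    (ne_of_apply_ne Polynomial.natDegree (by rw [hg₃, Polynomial.natDegree_one]; decide))
  have hroot : Polynomial.aeval p g = 0 := by simp [g, hp]
  refine ⟨(f %ₘ g).coeff 0, (f %ₘ g).coeff 1, (f %ₘ g).coeff 2, ?_⟩
  calc Polynomial.aeval p f = Polynomial.aeval p (f %ₘ g) :=
        (Polynomial.aeval_modByMonic_eq_self_of_root hroot).symm
    _ = _ := by
        rw [Polynomial.aeval_eq_sum_range' hdeg]
        simp only [Finset.sum_range_succ, Finset.range_zero, Finset.sum_empty, zero_add,
          Algebra.smul_def, pow_zero, mul_one, pow_one]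

theorem eq_or_eq_of_pow_three_eq (hw : w ^ 2 + w + 1 = 0) {x : Ω} (hx : x ^ 3 = p ^ 3) :
    x = p ∨ x = w * p ∨ x = w ^ 2 * p := by
  have h : (x - p) * ((x - w * p) * (x - w ^ 2 * p)) = 0 := by
    linear_combination hx - p * x * (x - p) * hw + (w - 1) * p ^ 2 * (x - p) * hw
  simpa only [mul_eq_zero, sub_eq_zero] using h

theorem apply_eq_or_eq_sq (hw : w ^ 2 + w + 1 = 0) (σ : Gal(Ω/k)) : σ w = w ∨ σ w = w ^ 2 := by
  have hσ := congrArg σ hw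
  simp only [map_add, map_pow, map_one, map_zero] at hσ
  have h : (σ w - w) * (σ w - w ^ 2) = 0 := by
    linear_combination hσ + (w - 1 - σ w) * hw
  simpa only [mul_eq_zero, sub_eq_zero] using h

theorem exists_isCubicFrame [IsGalois k Ω] (hq : ∀ r : k, r ^ 3 ≠ q)
    (hp : p ^ 3 = algebraMap k Ω q) (hw : w ^ 2 + w + 1 = 0) (hwp : w ∉ k⟮p⟯) :
    ∃ c t : Gal(Ω/k), IsCubicFrame p c t ∧ c p = w * p ∧ c w = w := by
  have hw₃ : w ^ 3 = 1 := by linear_combination (w - 1) * hw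
  have hw₁ : w ≠ 1 := fun h ↦ hwp (h ▸ one_mem _)
  have hp₀ : p ≠ 0 := fun h ↦ hq 0 ((algebraMap k Ω).injective (by rw [map_pow, ← hp, h, map_zero]))
  obtain ⟨t, htp, htw⟩ : ∃ t : Gal(Ω/k), t p = p ∧ t w = w ^ 2 := by
    rw [mem_adjoin_simple_iff_forall_fixed] at hwp
    push Not at hwp
    exact hwp.imp fun t ht ↦ ⟨ht.1, (apply_eq_or_eq_sq hw t).resolve_left ht.2⟩
  obtain ⟨σ, hσ⟩ := exists_algEquiv_of_pow_three_eq hq hp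
    (by rw [mul_pow, hw₃, one_mul, hp] : (w * p) ^ 3 = algebraMap k Ω q)
  obtain ⟨c, hcp, hcw⟩ : ∃ c : Gal(Ω/k), c p = w * p ∧ c w = w := by
    rcases apply_eq_or_eq_sq hw σ with h | h
    · exact ⟨σ, hσ, h⟩
    · refine ⟨σ * t, by rw [AlgEquiv.mul_apply, htp, hσ], ?_⟩
      rw [AlgEquiv.mul_apply, htw, map_pow, h]
      linear_combination w * hw₃
  have hccp : c (c p) = w ^ 2 * p := by
    rw [hcp, map_mul, hcw, hcp]
    ring
  refine ⟨c, t, ⟨fun σ ↦ ?_, ?_, ?_, htp, ?_⟩, hcp, hcw⟩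
  · rw [hccp, hcp]
    exact eq_or_eq_of_pow_three_eq hw (by rw [← map_pow, hp, AlgEquiv.commutes])
  · rw [hccp, map_mul, map_pow, hcw, hcp]
    linear_combination p * hw₃
  · rw [hcp, ne_eq, mul_eq_right₀ hp₀]
    exact hw₁
  · rw [hccp, hcp, map_mul, htw, htp]

theorem cubicNorm_one_add {c : Gal(Ω/k)} (hcp : c p = w * p) (hcw : c w = w)
    (hw : w ^ 2 + w + 1 = 0) : cubicNorm c (1 + p) = 1 + p ^ 3 := by
  simp only [cubicNorm_apply, map_add, map_one, map_mul, hcp, hcw]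
  linear_combination (p + w * p ^ 2 + (w - 1) * p ^ 3) * hw

end PureCubic

section CubeRootOfTwo
variable {Ω : Type*} [NormedField Ω] [NormedAlgebra ℚ_[2] Ω] {p : Ω} (hp : p ^ 3 = 2)
include hp

theorem norm_pow_three_eq : ‖p‖ ^ 3 = 1 / 2 := by
  rw [← norm_pow, hp, norm_two_eq]

theorem norm_pos_of_pow_three_eq_two : 0 < ‖p‖ :=
  norm_pos_iff.2 fun h ↦ by
    have := norm_pow_three_eq hp
    norm_num [h] at this

theorem norm_lt_one_of_pow_three_eq_two : ‖p‖ < 1 :=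
  (pow_lt_one_iff_of_nonneg (norm_nonneg p) three_ne_zero).1
    (by rw [norm_pow_three_eq hp]; norm_num)

theorem norm_zpow_inj {m n : ℤ} : ‖p‖ ^ m = ‖p‖ ^ n ↔ m = n :=
  zpow_right_inj₀ (norm_pos_of_pow_three_eq_two hp) (norm_lt_one_of_pow_three_eq_two hp).ne

theorem norm_zpow_lt {m n : ℤ} : ‖p‖ ^ m < ‖p‖ ^ n ↔ n < m :=
  zpow_lt_zpow_iff_right_of_lt_one₀ (norm_pos_of_pow_three_eq_two hp)
    (norm_lt_one_of_pow_three_eq_two hp)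

omit hp in
theorem pow_three_ne_two (r : ℚ_[2]) : r ^ 3 ≠ 2 := by
  intro hr
  have := congrArg Padic.valuation hr
  rw [Padic.valuation_pow, show (2 : ℚ_[2]) = ((2 : ℕ) : ℚ_[2]) from rfl, Padic.valuation_p] at this
  lia

end CubeRootOfTwo

section LeadingPower
variable {K : Type*} [NormedField K] {p x y : K} {S T : Set ℤ}

/-- Either `x = 0`, or `x` is congruent to a power of `p` with exponent in `S`, up to an element of
smaller norm. -/
def HasLeadingPower (p : K) (S : Set ℤ) (x : K) : Prop :=
  x = 0 ∨ ∃ n ∈ S, ‖x / p ^ n - 1‖ < 1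

namespace HasLeadingPower

theorem mono (hx : HasLeadingPower p S x) (hST : S ⊆ T) : HasLeadingPower p T x :=
  hx.imp_right fun ⟨n, hn, h⟩ ↦ ⟨n, hST hn, h⟩

variable [IsUltrametricDist K]

theorem add_of_norm_lt (hx : HasLeadingPower p S x) (hlt : ‖y‖ < ‖x‖) :
    HasLeadingPower p S (x + y) := by
  have hx₀ : x ≠ 0 := norm_pos_iff.1 ((norm_nonneg y).trans_lt hlt)
  obtain ⟨n, hn, h⟩ := hx.resolve_left hx₀
  refine .inr ⟨n, hn, ?_⟩
  rw [add_div, add_sub_right_comm]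
  refine norm_add_lt_of_lt h ?_
  rwa [norm_div, ← norm_eq_of_norm_div_sub_one_lt h, div_lt_one (norm_pos_iff.2 hx₀)]

theorem add (hp₀ : 0 < ‖p‖) (hp₁ : ‖p‖ ≠ 1) (hx : HasLeadingPower p S x)
    (hy : HasLeadingPower p T y) (hST : Disjoint S T) : HasLeadingPower p (S ∪ T) (x + y) := by
  have hxST := hx.mono (Set.subset_union_left (t := T))
  have hyST := hy.mono (Set.subset_union_right (s := S))
  rcases eq_or_ne x 0 with rfl | hx₀
  · rwa [zero_add]
  rcases eq_or_ne y 0 with rfl | hy₀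
  · rwa [add_zero]
  rcases lt_trichotomy ‖x‖ ‖y‖ with h | h | h
  · exact add_comm y x ▸ hyST.add_of_norm_lt h
  · obtain ⟨m, hm, hxm⟩ := hx.resolve_left hx₀
    obtain ⟨n, hn, hyn⟩ := hy.resolve_left hy₀
    rw [norm_eq_of_norm_div_sub_one_lt hxm, norm_eq_of_norm_div_sub_one_lt hyn, norm_zpow,
      norm_zpow, zpow_right_inj₀ hp₀ hp₁] at h
    exact absurd h (hST.ne_of_mem hm hn)
  · exact hxST.add_of_norm_lt h

end HasLeadingPower
end LeadingPower

section CubeRootOfTwo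
variable {Ω : Type*} [NormedField Ω] [NormedAlgebra ℚ_[2] Ω] {p x : Ω}
  (hp : p ^ 3 = 2)
include hp

theorem hasLeadingPower_algebraMap_mul_pow (a : ℚ_[2]) (j : ℕ) :
    HasLeadingPower p {n | n ≡ j [ZMOD 3]} (algebraMap ℚ_[2] Ω a * p ^ j) := by
  have hp₀ : p ≠ 0 := norm_pos_iff.1 (norm_pos_of_pow_three_eq_two hp)
  rcases eq_or_ne a 0 with rfl | ha
  · exact .inl (by rw [map_zero, zero_mul])
  obtain ⟨m, hm⟩ := exists_norm_div_two_zpow_sub_one_lt ha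
  refine .inr ⟨3 * m + j, by simp [Int.ModEq], ?_⟩
  rw [← norm_algebraMap' Ω] at hm
  simp only [map_sub, map_div₀, map_zpow₀, map_ofNat, map_one] at hm
  rwa [zpow_add₀ hp₀, zpow_mul, zpow_natCast, mul_div_mul_right _ _ (pow_ne_zero j hp₀), zpow_ofNat,
    hp]

variable [IsUltrametricDist Ω] [Algebra.IsAlgebraic ℚ_[2] Ω]

theorem exists_norm_div_zpow_sub_one_lt (hx : x ∈ ℚ_[2]⟮p⟯) (hx₀ : x ≠ 0) :
    ∃ n : ℤ, ‖x / p ^ n - 1‖ < 1 := by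
  obtain ⟨a, b, e, rfl⟩ := exists_eq_add_mul_add_mul_sq (q := 2) (by rw [hp, map_ofNat]) hx
  have leading := hasLeadingPower_algebraMap_mul_pow hp
  have hp₀ := norm_pos_of_pow_three_eq_two hp
  have hp₁ := (norm_lt_one_of_pow_three_eq_two hp).ne
  have := ((leading a 0).add hp₀ hp₁ (leading b 1) ?_).add hp₀ hp₁ (leading e 2) ?_
  · rw [pow_zero, mul_one, pow_one] at this
    obtain ⟨n, -, hn⟩ := this.resolve_left hx₀
    exact ⟨n, hn⟩
  all_goals
    simp only [Set.disjoint_left, Set.mem_union, Set.mem_ofPred_eq, Int.ModEq]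
    lia

theorem exists_norm_eq_zpow (hx : x ∈ ℚ_[2]⟮p⟯) (hx₀ : x ≠ 0) : ∃ n : ℤ, ‖x‖ = ‖p‖ ^ n :=
  (exists_norm_div_zpow_sub_one_lt hp hx hx₀).imp fun n hn ↦ by
    rw [norm_eq_of_norm_div_sub_one_lt hn, norm_zpow]

theorem notMem_of_sq_add_self_add_one_eq_zero {w : Ω} (hw : w ^ 2 + w + 1 = 0) :
    w ∉ ℚ_[2]⟮p⟯ := by
  intro hwp
  have hw₃ : w ^ 3 = 1 := by linear_combination (w - 1) * hw
  have hw₁ : w ≠ 1 := by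
    rintro rfl
    have : ‖(3 : Ω)‖ = 0 := by rw [← norm_zero (E := Ω), ← hw]; norm_num
    norm_num [norm_three_eq] at this
  have norm_w : ‖w‖ = 1 := (pow_eq_one_iff_of_nonneg (norm_nonneg w) three_ne_zero).1
    (by rw [← norm_pow, hw₃, norm_one])
  obtain ⟨n, hn⟩ := exists_norm_div_zpow_sub_one_lt hp hwp (norm_ne_zero_iff.1 (by simp [norm_w]))
  have hn₀ : n = 0 := by
    rw [← norm_zpow_inj hp, zpow_zero, ← norm_zpow, ← norm_eq_of_norm_div_sub_one_lt hn, norm_w]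
  rw [hn₀, zpow_zero, div_one] at hn
  exact hw₁ (eq_one_of_pow_three_eq_one hw₃ hn)

end CubeRootOfTwo

section CubeRootOfTwo
variable {Ω : Type*} [NormedField Ω] [NormedAlgebra ℚ_[2] Ω] [IsUltrametricDist Ω]
  {p x : Ω} (hp : p ^ 3 = 2)
include hp

theorem notMem_of_norm_sq_sub_one_eq [Algebra.IsAlgebraic ℚ_[2] Ω] {s : Ω} {m : ℕ} (hm : Odd m)
    (hm₆ : m < 6) (hs : ‖s ^ 2 - 1‖ = ‖p‖ ^ m) : s ∉ ℚ_[2]⟮p⟯ := by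
  intro hsL
  have hpos := norm_pos_of_pow_three_eq_two hp
  have hmul : ‖s - 1‖ * ‖s - 1 + 2‖ = ‖p‖ ^ m := by
    rw [← norm_mul, ← hs]
    ring_nf
  rcases le_or_gt ‖s - 1‖ ‖(2 : Ω)‖ with hle | hlt
  · have hle₆ : ‖p‖ ^ m ≤ ‖p‖ ^ 6 := calc
      ‖p‖ ^ m ≤ ‖(2 : Ω)‖ * ‖(2 : Ω)‖ := hmul ▸ mul_le_mul hle
          (norm_add_le_of_le_of_le hle le_rfl) (norm_nonneg _) (norm_nonneg _)
      _ = ‖p‖ ^ 6 := by rw [← norm_mul, ← norm_pow, ← hp]; ring_nf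
    exact hle₆.not_gt (pow_lt_pow_right_of_lt_one₀ hpos (norm_lt_one_of_pow_three_eq_two hp) hm₆)
  · obtain ⟨n, hn⟩ := exists_norm_eq_zpow hp (sub_mem hsL (one_mem _))
      (norm_pos_iff.1 ((norm_nonneg _).trans_lt hlt))
    have hadd : ‖s - 1 + 2‖ = ‖s - 1‖ := norm_eq_of_norm_sub_lt (by rwa [add_sub_cancel_left])
    rw [hadd, hn, ← zpow_add₀ hpos.ne', ← zpow_natCast, norm_zpow_inj hp] at hmul
    obtain ⟨l, rfl⟩ := hm
    lia

end CubeRootOfTwo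

section SquareClasses
variable {Ω : Type*} [NormedField Ω] [NormedAlgebra ℚ_[2] Ω] {p x : Ω}

/-- The elements of `L` that lie in the group generated by `ℚ_[2]`, the squares of `L`, `1 + p` and
`1 + p ^ 5`, where `L = ℚ_[2]⟮p⟯`. -/
def HasSquareClassForm (p x : Ω) : Prop :=
  ∃ q : ℚ_[2], ∃ s ∈ ℚ_[2]⟮p⟯, ∃ i j : ℕ,
    x = algebraMap ℚ_[2] Ω q * s ^ 2 * (1 + p) ^ i * (1 + p ^ 5) ^ j

namespace HasSquareClassForm
variable {y : Ω}

theorem algebraMap (q : ℚ_[2]) : HasSquareClassForm p (algebraMap ℚ_[2] Ω q) :=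
  ⟨q, 1, one_mem _, 0, 0, by ring⟩

theorem sq (hx : x ∈ ℚ_[2]⟮p⟯) : HasSquareClassForm p (x ^ 2) :=
  ⟨1, x, hx, 0, 0, by rw [map_one]; ring⟩

theorem one_add : HasSquareClassForm p (1 + p) :=
  ⟨1, 1, one_mem _, 1, 0, by rw [map_one]; ring⟩

theorem one_add_pow_five : HasSquareClassForm p (1 + p ^ 5) :=
  ⟨1, 1, one_mem _, 0, 1, by rw [map_one]; ring⟩

theorem mem (hx : HasSquareClassForm p x) : x ∈ ℚ_[2]⟮p⟯ := by
  obtain ⟨q, s, hs, i, j, rfl⟩ := hx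
  have hpL := mem_adjoin_simple_self ℚ_[2] p
  exact mul_mem (mul_mem (mul_mem (IntermediateField.algebraMap_mem _ q) (pow_mem hs 2))
    (pow_mem (add_mem (one_mem _) hpL) i)) (pow_mem (add_mem (one_mem _) (pow_mem hpL 5)) j)

theorem mul (hx : HasSquareClassForm p x) (hy : HasSquareClassForm p y) :
    HasSquareClassForm p (x * y) := by
  obtain ⟨q, s, hs, i, j, rfl⟩ := hx
  obtain ⟨q', s', hs', i', j', rfl⟩ := hy
  refine ⟨q * q', s * s', mul_mem hs hs', i + i', j + j', ?_⟩
  rw [map_mul]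
  ring

theorem of_div (hx : HasSquareClassForm p (x / y)) (hy : HasSquareClassForm p y) (hy₀ : y ≠ 0) :
    HasSquareClassForm p x :=
  div_mul_cancel₀ x hy₀ ▸ hx.mul hy

end HasSquareClassForm

theorem hasSquareClassForm_self (hp : p ^ 3 = 2) : HasSquareClassForm p p := by
  have hp₀ : p ≠ 0 := norm_pos_iff.1 (norm_pos_of_pow_three_eq_two hp)
  have h := (HasSquareClassForm.algebraMap (p := p) 2).mul
    (.sq (inv_mem (mem_adjoin_simple_self ℚ_[2] p)))
  rwa [map_ofNat, ← hp, inv_pow, pow_succ, mul_right_comm,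
    mul_inv_cancel₀ (pow_ne_zero 2 hp₀), one_mul] at h

theorem hasSquareClassForm_zpow (hp : p ^ 3 = 2) (n : ℤ) : HasSquareClassForm p (p ^ n) := by
  have hp₀ : p ≠ 0 := norm_pos_iff.1 (norm_pos_of_pow_three_eq_two hp)
  have hsq (l : ℤ) : HasSquareClassForm p (p ^ (2 * l)) := by
    rw [mul_comm, zpow_mul, zpow_ofNat]
    exact .sq (zpow_mem (mem_adjoin_simple_self ℚ_[2] p) l)
  obtain ⟨l, rfl | rfl⟩ := n.even_or_odd'
  · exact hsq l
  · rw [zpow_add₀ hp₀, zpow_one]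
    exact (hsq l).mul (hasSquareClassForm_self hp)

variable [IsUltrametricDist Ω] (hp : p ^ 3 = 2)
include hp

theorem HasSquareClassForm.of_step [Algebra.IsAlgebraic ℚ_[2] Ω] {u : Ω} {m : ℕ}
    (hu : HasSquareClassForm p u) (hup : ‖u - (1 + p ^ (m + 1))‖ < ‖p‖ ^ (m + 1))
    (hstep : ∀ y ∈ ℚ_[2]⟮p⟯, ‖y - 1‖ < ‖p‖ ^ (m + 1) → HasSquareClassForm p y) :
    ∀ y ∈ ℚ_[2]⟮p⟯, ‖y - 1‖ < ‖p‖ ^ m → HasSquareClassForm p y := by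
  intro y hy hym
  have hpos := norm_pos_of_pow_three_eq_two hp
  rcases eq_or_ne y 1 with rfl | hy₁
  · exact hstep 1 hy (by rw [sub_self, norm_zero]; exact pow_pos hpos _)
  obtain ⟨n, hn⟩ := exists_norm_div_zpow_sub_one_lt hp (sub_mem hy (one_mem _)) (sub_ne_zero.2 hy₁)
  have hyn : ‖y - 1‖ = ‖p‖ ^ n := by rw [norm_eq_of_norm_div_sub_one_lt hn, norm_zpow]
  have hmn : (m : ℤ) < n := by
    rwa [hyn, ← zpow_natCast, norm_zpow_lt hp] at hym
  rcases (Int.add_one_le_iff.2 hmn).eq_or_lt with heq | hlt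
  · obtain rfl : n = (m + 1 : ℕ) := by rw [← heq, Nat.cast_succ]
    rw [zpow_natCast] at hn hyn
    have hyp : ‖y - (1 + p ^ (m + 1))‖ < ‖p‖ ^ (m + 1) := by
      rw [← sub_sub, ← norm_pow]
      exact (norm_sub_lt_iff_norm_div_sub_one_lt (pow_ne_zero _ (norm_pos_iff.1 hpos))).2 hn
    have hpm : ‖p‖ ^ (m + 1) < 1 :=
      pow_lt_one₀ hpos.le (norm_lt_one_of_pow_three_eq_two hp) m.succ_ne_zero
    have hu₁ : ‖u‖ = 1 := norm_eq_one_of_norm_sub_one_lt <|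
      norm_sub_lt_trans (hup.trans hpm) (by rwa [add_sub_cancel_left, norm_pow])
    have hu₀ : u ≠ 0 := norm_pos_iff.1 (hu₁ ▸ one_pos)
    refine (hstep (y / u) (div_mem hy hu.mem) ?_).of_div hu hu₀
    rw [div_sub_one hu₀, norm_div, hu₁, div_one]
    exact norm_sub_lt_trans hyp (by rwa [norm_sub_rev])
  · exact hstep y hy (by rwa [hyn, ← zpow_natCast, norm_zpow_lt hp, Nat.cast_succ])

theorem hasSquareClassForm_of_norm_sub_one_lt [IsAlgClosed Ω] [IsGalois ℚ_[2] Ω]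
    (hx : x ∈ ℚ_[2]⟮p⟯) (hlt : ‖x - 1‖ < 1) : HasSquareClassForm p x := by
  have hpL := mem_adjoin_simple_self ℚ_[2] p
  have hsq (y : Ω) (hy : y ∈ ℚ_[2]⟮p⟯) (hlt : ‖y - 1‖ < ‖p‖ ^ 6) : HasSquareClassForm p y := by
    have hp₆ : ‖p‖ ^ 6 = 1 / 4 := by rw [pow_mul ‖p‖ 3 2, norm_pow_three_eq hp]; norm_num
    obtain ⟨r, hr, rfl⟩ := exists_mem_sq_eq (hp₆ ▸ hlt) hy
    exact .sq hr
  have hcast (n : ℕ) : HasSquareClassForm p (n : Ω) :=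
    map_natCast (algebraMap ℚ_[2] Ω) n ▸ .algebraMap n
  have hpow {m n : ℕ} (hmn : m < n) {y : Ω} (hy : y = p ^ n) : ‖y‖ < ‖p‖ ^ m := by
    rw [hy, norm_pow]
    exact pow_lt_pow_right_of_lt_one₀ (norm_pos_of_pow_three_eq_two hp)
      (norm_lt_one_of_pow_three_eq_two hp) hmn
  have hzero {m : ℕ} {y : Ω} (hy : y = 0) : ‖y‖ < ‖p‖ ^ m := by
    rw [hy, norm_zero]
    exact pow_pos (norm_pos_of_pow_three_eq_two hp) m
  have h₅ := HasSquareClassForm.of_step hp (m := 5) (hcast 5)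
    (hzero (by push_cast; linear_combination (-p ^ 3 - 2) * hp)) hsq
  have h₄ := HasSquareClassForm.of_step hp (m := 4) .one_add_pow_five (hzero (by ring)) h₅
  have h₃ := HasSquareClassForm.of_step hp (m := 3)
    (.sq (add_mem (one_mem _) (pow_mem hpL 2)))
    (hpow (lt_add_one 4) (by linear_combination -p ^ 2 * hp)) h₄
  have h₂ := HasSquareClassForm.of_step hp (m := 2) (hcast 3)
    (hzero (by push_cast; linear_combination -hp)) h₃
  have h₁ := HasSquareClassForm.of_step hp (m := 1) (.sq (add_mem (one_mem _) hpL))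
    (hpow (by norm_num : 2 < 4) (by linear_combination -p * hp)) h₂
  have h₀ := HasSquareClassForm.of_step hp (m := 0) .one_add (hzero (by ring)) h₁
  exact h₀ x hx (by rwa [pow_zero])

theorem hasSquareClassForm_of_mem [IsAlgClosed Ω] [IsGalois ℚ_[2] Ω]
    (hx : x ∈ ℚ_[2]⟮p⟯) : HasSquareClassForm p x := by
  rcases eq_or_ne x 0 with rfl | hx₀
  · exact map_zero (algebraMap ℚ_[2] Ω) ▸ .algebraMap 0
  obtain ⟨n, hn⟩ := exists_norm_div_zpow_sub_one_lt hp hx hx₀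
  have hp₀ : p ≠ 0 := norm_pos_iff.1 (norm_pos_of_pow_three_eq_two hp)
  exact (hasSquareClassForm_of_norm_sub_one_lt hp
    (div_mem hx (zpow_mem (mem_adjoin_simple_self ℚ_[2] p) n)) hn).of_div
    (hasSquareClassForm_zpow hp n) (zpow_ne_zero n hp₀)

end SquareClasses

section Parity
variable {k Ω : Type*} [Field k] [Field Ω] [Algebra k Ω] {L : IntermediateField k Ω} {a z : Ω}

theorem mem_of_mul_mem_left (ha : a ∈ L) (ha₀ : a ≠ 0) (h : a * z ∈ L) : z ∈ L :=
  inv_mul_cancel_left₀ ha₀ z ▸ mul_mem (inv_mem ha) h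

theorem mem_or_mul_mem_of_pow_mul_mem (ha : a ^ 2 ∈ L) (ha₀ : a ≠ 0) {n : ℕ}
    (h : a ^ n * z ∈ L) : z ∈ L ∨ a * z ∈ L := by
  have hcancel (l : ℕ) {y : Ω} (hy : (a ^ 2) ^ l * y ∈ L) : y ∈ L :=
    mem_of_mul_mem_left (pow_mem ha l) (pow_ne_zero l (pow_ne_zero 2 ha₀)) hy
  obtain ⟨l, rfl | rfl⟩ := n.even_or_odd'
  · exact .inl (hcancel l (by rwa [← pow_mul]))
  · exact .inr (hcancel l (by rwa [← pow_mul, ← mul_assoc, ← pow_succ]))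

theorem mem_of_sq_eq_sq (hz : z ∈ L) (h : a ^ 2 = z ^ 2) : a ∈ L :=
  (sq_eq_sq_iff_eq_or_eq_neg.1 h).elim (· ▸ hz) (· ▸ neg_mem hz)

theorem IsResolventRoot.of_cubicNorm_sq {p g : Ω} {c : Gal(Ω/k)} {q : k} (hsq : g ^ 2 ∈ k⟮p⟯)
    (hg : g ∉ k⟮p⟯) (hN : cubicNorm c (g ^ 2) = algebraMap k Ω q ^ 2) : IsResolventRoot p c g where
  sq_mem := hsq
  notMem := hg
  cubicNorm_mem := by
    rw [map_pow] at hN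
    exact (sq_eq_sq_iff_eq_or_eq_neg.1 hN).elim (⟨q, ·.symm⟩) (⟨-q, by rw [map_neg, ·]⟩)

end Parity

section Classification
variable {Ω : Type*} [NormedField Ω] [NormedAlgebra ℚ_[2] Ω] [IsUltrametricDist Ω]

theorem notMem_of_sq_eq_one_add_pow_mul [Algebra.IsAlgebraic ℚ_[2] Ω] {p s u : Ω} {m : ℕ}
    (hp : p ^ 3 = 2) (hm : Odd m) (hm₆ : m < 6) (hu : ‖u - 1‖ < ‖p‖ ^ m)
    (hs : s ^ 2 = (1 + p ^ m) * u) : s ∉ ℚ_[2]⟮p⟯ := by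
  refine notMem_of_norm_sq_sub_one_eq hp hm hm₆ ?_
  have hpm : ‖p‖ ^ m < 1 :=
    pow_lt_one₀ (norm_nonneg p) (norm_lt_one_of_pow_three_eq_two hp) hm.pos.ne'
  have h₁ : ‖1 + p ^ m‖ = 1 :=
    norm_eq_one_of_norm_sub_one_lt (by rwa [add_sub_cancel_left, norm_pow])
  rw [← norm_pow] at hu ⊢
  refine norm_eq_of_norm_sub_lt ?_
  rwa [hs, sub_sub, ← mul_sub_one, norm_mul, h₁, one_mul]

omit [IsUltrametricDist Ω] in
theorem norm_three_sub_one_lt {p : Ω} (hp : p ^ 3 = 2) : ‖(3 : Ω) - 1‖ < ‖p‖ ^ 1 := by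
  rw [show (3 : Ω) - 1 = p ^ 3 by rw [hp]; norm_num, norm_pow]
  exact pow_lt_pow_right_of_lt_one₀ (norm_pos_of_pow_three_eq_two hp)
    (norm_lt_one_of_pow_three_eq_two hp) (by norm_num)

variable [IsAlgClosed Ω] [IsGalois ℚ_[2] Ω]

variable (Ω) in
theorem exists_algebraMap_sq_eq_thirty_three : ∃ r : ℚ_[2], algebraMap ℚ_[2] Ω r ^ 2 = 33 := by
  have h : ‖(33 : Ω) - 1‖ < 1 / 4 := by
    rw [show (33 : Ω) - 1 = 2 ^ 5 by norm_num, norm_pow, norm_two_eq]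
    norm_num
  obtain ⟨_, ⟨r, rfl⟩, hr⟩ := exists_mem_sq_eq (L := ⊥) h (ofNat_mem _ 33)
  exact ⟨r, hr⟩

variable {p w g g₁ g₂ : Ω} {c t : Gal(Ω/ℚ_[2])} (hp : p ^ 3 = 2) (hcp : c p = w * p)
  (hcw : c w = w) (hw : w ^ 2 + w + 1 = 0) (hg₁ : g₁ ^ 2 = 3 * (1 + p)) (hg₂ : g₂ ^ 2 = 1 + p ^ 5)

section Norm
include hp hcp hcw hw

omit [IsUltrametricDist Ω] [IsAlgClosed Ω] [IsGalois ℚ_[2] Ω] in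
theorem cubicNorm_one_add_eq_three : cubicNorm c (1 + p) = 3 := by
  rw [cubicNorm_one_add hcp hcw hw, hp]
  norm_num

omit [IsUltrametricDist Ω] [IsAlgClosed Ω] [IsGalois ℚ_[2] Ω] in
theorem cubicNorm_one_add_pow_five : cubicNorm c (1 + p ^ 5) = 33 := by
  have hw₃ : w ^ 3 = 1 := by linear_combination (w - 1) * hw
  have hcp₅ : c (p ^ 5) = w ^ 2 * p ^ 5 := by
    rw [map_pow, hcp]
    linear_combination w ^ 2 * p ^ 5 * hw₃
  rw [cubicNorm_one_add hcp₅ (by rw [map_pow, hcw]) (by linear_combination hw + w * hw₃), ← pow_mul,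
    mul_comm, pow_mul, hp]
  norm_num

omit [IsUltrametricDist Ω] [IsAlgClosed Ω] [IsGalois ℚ_[2] Ω] in
theorem cubicNorm_three_mul_one_add : cubicNorm c (3 * (1 + p)) = 9 ^ 2 := by
  have h₃ := cubicNorm_algebraMap c (3 : ℚ_[2])
  rw [map_pow, map_ofNat] at h₃
  rw [map_mul, h₃, cubicNorm_one_add_eq_three hp hcp hcw hw]
  norm_num

omit [IsAlgClosed Ω] in
include hg₁ in
theorem isResolventRoot_of_sq_eq_three_mul : IsResolventRoot p c g₁ := by
  have hpL := mem_adjoin_simple_self ℚ_[2] p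
  refine .of_cubicNorm_sq (q := 9) ?_ ?_ ?_
  · exact hg₁ ▸ mul_mem (ofNat_mem _ 3) (add_mem (one_mem _) hpL)
  · exact notMem_of_sq_eq_one_add_pow_mul hp odd_one (by norm_num) (norm_three_sub_one_lt hp)
      (by rw [hg₁]; ring)
  · rw [hg₁, cubicNorm_three_mul_one_add hp hcp hcw hw, map_ofNat]

include hg₂ in
theorem isResolventRoot_of_sq_eq_one_add_pow_five : IsResolventRoot p c g₂ := by
  obtain ⟨r, hr⟩ := exists_algebraMap_sq_eq_thirty_three Ω
  have hpos := norm_pos_of_pow_three_eq_two hp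
  refine .of_cubicNorm_sq (q := r) ?_ ?_ ?_
  · exact hg₂ ▸ add_mem (one_mem _) (pow_mem (mem_adjoin_simple_self ℚ_[2] p) 5)
  · refine notMem_of_sq_eq_one_add_pow_mul (m := 5) (u := 1) hp (by decide) (by norm_num) ?_ ?_
    · rw [sub_self, norm_zero]
      exact pow_pos hpos 5
    · rw [hg₂, mul_one]
  · rw [hg₂, cubicNorm_one_add_pow_five hp hcp hcw hw, hr]

include hg₁ hg₂ in
theorem isResolventRoot_mul : IsResolventRoot p c (g₁ * g₂) := by
  obtain ⟨r, hr⟩ := exists_algebraMap_sq_eq_thirty_three Ω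
  have h₁ := isResolventRoot_of_sq_eq_three_mul hp hcp hcw hw hg₁
  have h₂ := isResolventRoot_of_sq_eq_one_add_pow_five hp hcp hcw hw hg₂
  have hlt := norm_lt_one_of_pow_three_eq_two hp
  have h₅ : ‖1 + p ^ 5 - 1‖ < ‖p‖ ^ 1 := by
    rw [add_sub_cancel_left, norm_pow]
    exact pow_lt_pow_right_of_lt_one₀ (norm_pos_of_pow_three_eq_two hp) hlt (by norm_num)
  refine .of_cubicNorm_sq (q := 9 * r) ?_ ?_ ?_
  · exact mul_pow g₁ g₂ 2 ▸ mul_mem h₁.sq_mem h₂.sq_mem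
  · exact notMem_of_sq_eq_one_add_pow_mul hp odd_one (by norm_num)
      (norm_mul_sub_one_lt (norm_three_sub_one_lt hp) h₅ (by rw [pow_one]; exact hlt.le))
      (by rw [mul_pow, hg₁, hg₂]; ring)
  · rw [mul_pow, hg₁, hg₂, map_mul, cubicNorm_three_mul_one_add hp hcp hcw hw,
      cubicNorm_one_add_pow_five hp hcp hcw hw, map_mul, mul_pow, hr, map_ofNat]

theorem exists_mul_three_pow_eq_sq (F : IsCubicFrame p c t) {q m : ℚ_[2]} {s : Ω} {i j : ℕ}
    (hs : s ∈ ℚ_[2]⟮p⟯) (hs₀ : s ≠ 0) (hq₀ : q ≠ 0)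
    (hN : cubicNorm c (algebraMap ℚ_[2] Ω q * s ^ 2 * (1 + p) ^ i * (1 + p ^ 5) ^ j) =
      algebraMap ℚ_[2] Ω m ^ 2) :
    ∃ a : ℚ_[2], algebraMap ℚ_[2] Ω q * 3 ^ i = algebraMap ℚ_[2] Ω a ^ 2 := by
  obtain ⟨n, hn⟩ := F.cubicNorm_mem_range hs
  obtain ⟨r, hr⟩ := exists_algebraMap_sq_eq_thirty_three Ω
  simp only [map_mul, map_pow, cubicNorm_algebraMap, ← hn, cubicNorm_one_add_eq_three hp hcp hcw hw,
    cubicNorm_one_add_pow_five hp hcp hcw hw, ← hr] at hN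
  have hψ : algebraMap ℚ_[2] Ω q ≠ 0 := (_root_.map_ne_zero _).2 hq₀
  have hn₀ : algebraMap ℚ_[2] Ω n ≠ 0 := hn ▸ cubicNorm_ne_zero hs₀
  have hr₀ : algebraMap ℚ_[2] Ω r ≠ 0 := by
    rintro h
    have := charZero_of_injective_algebraMap (algebraMap ℚ_[2] Ω).injective
    norm_num [h] at hr
  refine ⟨m / (q * n * r ^ j), ?_⟩
  rw [map_div₀, map_mul, map_mul, map_pow, div_pow, ← hN]
  field_simp
  ring

include hg₁ hg₂ in
theorem IsResolventRoot.exists_pow_mul_pow_mul_mem (F : IsCubicFrame p c t)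
    (hg : IsResolventRoot p c g) : ∃ i j : ℕ, g₁ ^ i * (g₂ ^ j * g) ∈ ℚ_[2]⟮p⟯ := by
  obtain ⟨q, s, hs, i, j, hqs⟩ := hasSquareClassForm_of_mem hp hg.sq_mem
  obtain ⟨m, hm⟩ := hg.cubicNorm_mem
  have hg₀ := pow_ne_zero 2 hg.ne_zero
  have hs₀ : s ≠ 0 := by
    rintro rfl
    simp [hqs] at hg₀
  have hq₀ : q ≠ 0 := by
    rintro rfl
    simp [hqs] at hg₀
  obtain ⟨a, ha⟩ := exists_mul_three_pow_eq_sq hp hcp hcw hw F hs hs₀ hq₀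
    (by rw [← hqs, map_pow, hm])
  have hpL := mem_adjoin_simple_self ℚ_[2] p
  have hL : algebraMap ℚ_[2] Ω a * s * (1 + p) ^ i * (1 + p ^ 5) ^ j ∈ ℚ_[2]⟮p⟯ :=
    mul_mem (mul_mem (mul_mem (IntermediateField.algebraMap_mem _ _) hs)
      (pow_mem (add_mem (one_mem _) hpL) i)) (pow_mem (add_mem (one_mem _) (pow_mem hpL 5)) j)
  refine ⟨i, j, mem_of_sq_eq_sq hL ?_⟩
  calc (g₁ ^ i * (g₂ ^ j * g)) ^ 2
    _ = (g₁ ^ 2) ^ i * ((g₂ ^ 2) ^ j * g ^ 2) := by ring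
    _ = algebraMap ℚ_[2] Ω q * 3 ^ i * (s * (1 + p) ^ i * (1 + p ^ 5) ^ j) ^ 2 := by
      rw [hg₁, hg₂, hqs, mul_pow 3]
      ring
    _ = _ := by
      rw [ha]
      ring

include hg₁ hg₂ in
theorem IsResolventRoot.mul_mem_or (F : IsCubicFrame p c t) (hg : IsResolventRoot p c g) :
    g * g₁ ∈ ℚ_[2]⟮p⟯ ∨ g * g₂ ∈ ℚ_[2]⟮p⟯ ∨ g * (g₁ * g₂) ∈ ℚ_[2]⟮p⟯ := by
  have h₁ := isResolventRoot_of_sq_eq_three_mul hp hcp hcw hw hg₁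
  have h₂ := isResolventRoot_of_sq_eq_one_add_pow_five hp hcp hcw hw hg₂
  obtain ⟨i, j, hij⟩ := hg.exists_pow_mul_pow_mul_mem hp hcp hcw hw hg₁ hg₂ F
  rw [mul_comm g, mul_comm g, mul_comm g, mul_assoc, mul_left_comm]
  rcases mem_or_mul_mem_of_pow_mul_mem h₁.sq_mem h₁.ne_zero hij with h | h
  · rcases mem_or_mul_mem_of_pow_mul_mem h₂.sq_mem h₂.ne_zero h with h | h
    · exact absurd h hg.notMem
    · exact .inr (.inl h)
  · rw [mul_left_comm] at h
    rcases mem_or_mul_mem_of_pow_mul_mem h₂.sq_mem h₂.ne_zero h with h | h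
    · exact .inl h
    · exact .inr (.inr h)

end Norm

variable (Ω) in
theorem exists_isCubicFrame_of_pow_three_eq_two : ∃ (p w : Ω) (c t : Gal(Ω/ℚ_[2])), p ^ 3 = 2 ∧
    w ^ 2 + w + 1 = 0 ∧ IsCubicFrame p c t ∧ c p = w * p ∧ c w = w := by
  obtain ⟨p, hp⟩ := IsAlgClosed.exists_pow_nat_eq (2 : Ω) three_pos
  obtain ⟨w, hw⟩ : ∃ w : Ω, w ^ 2 + w + 1 = 0 := by
    have := charZero_of_injective_algebraMap (algebraMap ℚ_[2] Ω).injective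
    obtain ⟨d, hd⟩ := IsAlgClosed.exists_pow_nat_eq (-3 : Ω) two_pos
    exact ⟨(d - 1) / 2, by linear_combination hd / 4⟩
  obtain ⟨c, t, F, hcp, hcw⟩ := exists_isCubicFrame pow_three_ne_two (by rwa [map_ofNat]) hw
    (notMem_of_sq_add_self_add_one_eq_zero hp hw)
  exact ⟨p, w, c, t, hp, hw, F, hcp, hcw⟩

theorem IsSymmetricFamily.exists_algEquiv_apply_eq (hp : p ^ 3 = 2) {a : Fin 3 → Ω}
    (ha : IsSymmetricFamily ℚ_[2] a) : ∃ q ∈ ℚ_[2]⟮a 0⟯, ∃ ρ : Gal(Ω/ℚ_[2]), ρ q = p := by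
  obtain ⟨q, hqa, hq⟩ := ha.exists_pow_three_eq_two
  exact ⟨q, hqa, exists_algEquiv_of_pow_three_eq pow_three_ne_two (by rwa [map_ofNat])
    (by rwa [map_ofNat])⟩

include hp hcp hcw hw hg₁ hg₂ in
theorem setOf_isSymmetricExtension_eq (F : IsCubicFrame p c t) :
    {E : IntermediateField ℚ_[2] Ω | IsSymmetricExtension (Fin 4) E} =
      {resolventField c g₁, resolventField c g₂, resolventField c (g₁ * g₂)} := by
  have := charZero_of_injective_algebraMap (algebraMap ℚ_[2] Ω).injective
  have h₁ := isResolventRoot_of_sq_eq_three_mul hp hcp hcw hw hg₁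
  have h₂ := isResolventRoot_of_sq_eq_one_add_pow_five hp hcp hcw hw hg₂
  have h₁₂ := isResolventRoot_mul hp hcp hcw hw hg₁ hg₂
  ext E
  simp only [Set.mem_ofPred_eq, Set.mem_insert_iff, Set.mem_singleton_iff]
  constructor
  · intro hE
    obtain ⟨g, hg, rfl⟩ :=
      hE.exists_isResolventRoot F fun a ha ↦ ha.exists_algEquiv_apply_eq hp
    rw [hg.resolventField_eq_iff F h₁, hg.resolventField_eq_iff F h₂,
      hg.resolventField_eq_iff F h₁₂]
    exact hg.mul_mem_or hp hcp hcw hw hg₁ hg₂ F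
  · rintro (rfl | rfl | rfl)
    exacts [h₁.isSymmetricExtension F, h₂.isSymmetricExtension F, h₁₂.isSymmetricExtension F]

variable (Ω) in
theorem ncard_isSymmetricExtension_fin_four :
    {E : IntermediateField ℚ_[2] Ω | IsSymmetricExtension (Fin 4) E}.ncard = 3 := by
  have := charZero_of_injective_algebraMap (algebraMap ℚ_[2] Ω).injective
  obtain ⟨p, w, c, t, hp, hw, F, hcp, hcw⟩ := exists_isCubicFrame_of_pow_three_eq_two Ω
  obtain ⟨g₁, hg₁⟩ := IsAlgClosed.exists_pow_nat_eq (3 * (1 + p)) two_pos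
  obtain ⟨g₂, hg₂⟩ := IsAlgClosed.exists_pow_nat_eq (1 + p ^ 5) two_pos
  have h₁ := isResolventRoot_of_sq_eq_three_mul hp hcp hcw hw hg₁
  have h₂ := isResolventRoot_of_sq_eq_one_add_pow_five hp hcp hcw hw hg₂
  have h₁₂ := isResolventRoot_mul hp hcp hcw hw hg₁ hg₂
  refine Set.ncard_eq_three.2 ⟨_, _, _, ?_, ?_, ?_,
    setOf_isSymmetricExtension_eq hp hcp hcw hw hg₁ hg₂ F⟩
  · rw [Ne, h₁.resolventField_eq_iff F h₂]
    exact h₁₂.notMem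
  · rw [Ne, h₁.resolventField_eq_iff F h₁₂, ← mul_assoc, ← sq]
    exact fun h ↦ h₂.notMem (mem_of_mul_mem_left h₁.sq_mem (pow_ne_zero 2 h₁.ne_zero) h)
  · rw [Ne, h₂.resolventField_eq_iff F h₁₂, mul_left_comm, ← sq]
    exact fun h ↦ h₁.notMem (mem_of_mul_mem_left h₂.sq_mem (pow_ne_zero 2 h₂.ne_zero)
      (mul_comm g₁ _ ▸ h))

end Classification

/-- There are exactly three finite Galois extensions of `ℚ_2` inside a fixed algebraic
closure `Ω` whose Galois group is isomorphic to the symmetric group `S₄`. -/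
theorem stmt_15 (Ω : Type) [Field Ω] [Algebra ℚ_[2] Ω] [IsAlgClosure ℚ_[2] Ω] :
    {E : IntermediateField ℚ_[2] Ω | FiniteDimensional ℚ_[2] ↥E ∧ IsGalois ℚ_[2] ↥E ∧
      Nonempty ((↥E ≃ₐ[ℚ_[2]] ↥E) ≃* Equiv.Perm (Fin 4))}.ncard = 3 := by
  have : IsAlgClosed Ω := IsAlgClosure.isAlgClosed ℚ_[2]
  have : Normal ℚ_[2] Ω := IsAlgClosure.normal ℚ_[2] Ω
  have : IsGalois ℚ_[2] Ω := {}
  let := spectralNorm.normedField ℚ_[2] Ω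
  let := spectralNorm.normedAlgebra ℚ_[2] Ω
  have : IsUltrametricDist Ω :=
    IsUltrametricDist.isUltrametricDist_of_isNonarchimedean_norm isNonarchimedean_spectralNorm
  exact ncard_isSymmetricExtension_fin_four Ω
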